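/- arXiv:2601.09547 — 4 statements merged into one kernel-verified Lean document; each statement's English description precedes it below -/
import Mathlib

section
/- Fix an integer n ≥ 2 and a real number ρ with ρ ≠ 0 and ρ ≠ 1. For each β ∈ (0,1) set r₀ = (ρ − 1 − βn + β)/2 and r₁ = r₀ − (β + 1/2). Then for Lebesgue-almost every β ∈ (0,1), for every c > 0, the inequality |j·sin(π(jβ − r₀)) + ρ(ρ−1)·sin(π(jβ − r₁))| < c has infinitely many solutions j ∈ ℕ. -/
open MeasureTheory Real

/-!
Write `f_j(β)` for the expression inside the absolute value and `K = ρ(ρ-1)`.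

For every irrational `β` there are infinitely many `j` for which `jβ - r₀` lies within `5/j` of an
integer (`exists_inhom_approx`, an inhomogeneous Dirichlet theorem). For such large `j`, moving `β`
by `±A/j²` with `A = 6 + |K|` moves the dominant term `j sin(π(jβ - r₀))` to values of opposite
signs and of absolute value greater than `|K|`, so `f_j` has a zero within `A/j²` of `β`
(`exists_zero_near`). Thus almost every `β` lies in the `A/j²`-neighbourhood of the zero set of `f_j`
for infinitely many `j`.

By Cassels's lemma (`blimsup_cthickening_mul_ae_eq`, a consequence of the Lebesgue density theorem)
multiplying all radii by a constant changes such a limsup set only by a null set, so the same holds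
with `A` replaced by an arbitrarily small `ε`. Since `f_j` is Lipschitz with a constant `O(j²)`
(`abs_f_sub_le`), this gives `|f_j(β)| = O(ε)` for infinitely many `j`.
-/

/-- The function `f_j(β) = j sin(π(jβ - r₀)) + ρ(ρ-1) sin(π(jβ - r₁))`. -/
noncomputable def f (n : ℕ) (ρ : ℝ) (j : ℕ) (β : ℝ) : ℝ :=
  (j : ℝ) * Real.sin (π * ((j : ℝ) * β - (ρ - 1 - β * n + β) / 2)) +
    ρ * (ρ - 1) *
      Real.sin (π * ((j : ℝ) * β - ((ρ - 1 - β * n + β) / 2 - (β + 1 / 2))))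

/-- Inhomogeneous Dirichlet approximation. If `a/d` is a good reduced approximation to `α`, then
some `j ∈ [d, 2d)` has `j a / d` within `1/(2d)` of `γ` modulo `1`. -/
lemma exists_inhom_approx {α : ℝ} (hα : Irrational α) (γ : ℝ) (J : ℕ) :
    ∃ j : ℕ, J < j ∧ ∃ m : ℤ, |(j : ℝ) * α - γ - m| ≤ 5 / j := by
  obtain ⟨N, hN0, hN⟩ : ∃ N : ℕ, 0 < N ∧
      ∀ r : ℚ, r.den ≤ J → 1 / ((N : ℝ) + 1) < dist α r := by
    obtain ⟨δ, hδ, h⟩ := Metric.eventually_nhds_iff.1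
      (hα.eventually_forall_le_dist_cast_rat_of_den_le J)
    obtain ⟨N, hN⟩ := exists_nat_one_div_lt (half_pos hδ)
    refine ⟨N + 1, N.succ_pos, fun r hr => ?_⟩
    have h1 : δ / 2 ≤ dist α r := h (by
      rw [Real.dist_eq, sub_zero, abs_of_pos (half_pos hδ)]; linarith) r hr
    refine lt_of_le_of_lt ?_ (hN.trans_le h1)
    apply one_div_le_one_div_of_le (by positivity)
    push_cast; linarith
  obtain ⟨q, hq, hqN⟩ := Real.exists_rat_abs_sub_le_and_den_le α hN0
  have hd1 : (1 : ℝ) ≤ q.den := by exact_mod_cast q.pos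
  have hd0 : (0 : ℝ) < q.den := by linarith
  have hqN' : (q.den : ℝ) ≤ N := by exact_mod_cast hqN
  have hJ : J < q.den := by
    by_contra hcon
    have h1 := hN q (not_lt.1 hcon)
    rw [Real.dist_eq] at h1
    have h2 : 1 / (((N : ℝ) + 1) * q.den) ≤ 1 / ((N : ℝ) + 1) := by
      apply one_div_le_one_div_of_le (by positivity)
      nlinarith
    linarith
  set a : ℤ := round ((q.den : ℝ) * γ) with ha
  have hcop : IsCoprime q.num (q.den : ℤ) := by
    rw [Int.isCoprime_iff_gcd_eq_one]
    simpa [Int.gcd] using q.reduced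
  obtain ⟨u, v, huv⟩ := hcop
  have hdz : (0 : ℤ) < q.den := by exact_mod_cast q.pos
  have hr0 := Int.emod_nonneg (a * u) hdz.ne'
  have hr1 := Int.emod_lt_of_pos (a * u) hdz
  have hr2 := Int.emod_add_mul_ediv (a * u) q.den
  set t := (a * u) / (q.den : ℤ)
  obtain ⟨r, hr⟩ := Int.eq_ofNat_of_zero_le hr0
  rw [hr] at hr1 hr2
  have hrd : r < q.den := by exact_mod_cast hr1
  refine ⟨q.den + r, by omega, q.num - a * v - t * q.num, ?_⟩
  have hjd : (((q.den + r : ℕ) : ℝ)) ≤ 2 * q.den := by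
    have : (r : ℝ) ≤ q.den := by exact_mod_cast hrd.le
    push_cast; linarith
  have hj0 : (0 : ℝ) < ((q.den + r : ℕ) : ℝ) := by
    push_cast; positivity
  have key : ((q.den + r : ℕ) : ℤ) * q.num - q.den * (q.num - a * v - t * q.num) = a := by
    push_cast
    linear_combination q.num * hr2 + a * huv
  have keyR : (((q.den + r : ℕ) : ℝ)) * q.num
      - q.den * ((q.num - a * v - t * q.num : ℤ) : ℝ) = a := by
    exact_mod_cast key
  set j : ℝ := ((q.den + r : ℕ) : ℝ)
  set m : ℝ := ((q.num - a * v - t * q.num : ℤ) : ℝ)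
  have hnum : (q : ℝ) * q.den = q.num := by exact_mod_cast Rat.mul_den_eq_num q
  have hround := abs_sub_round ((q.den : ℝ) * γ)
  rw [← ha] at hround
  have e1 : (q.den : ℝ) * (j * α - γ - m)
      = j * (q.den * (α - q)) - ((q.den : ℝ) * γ - a) := by
    rw [← keyR, ← hnum]; ring
  have e2 : |(q.den : ℝ) * (α - q)| ≤ 1 / q.den := by
    rw [abs_mul, abs_of_pos hd0]
    calc (q.den : ℝ) * |α - q| ≤ q.den * (1 / (((N : ℝ) + 1) * q.den)) := by gcongr
      _ = 1 / ((N : ℝ) + 1) := by field_simp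
      _ ≤ 1 / q.den := one_div_le_one_div_of_le hd0 (by linarith)
  have e3 : |j * (q.den * (α - q))| ≤ 2 := by
    rw [abs_mul, abs_of_pos hj0]
    calc j * |(q.den : ℝ) * (α - q)| ≤ (2 * q.den) * (1 / q.den) := by gcongr
      _ = 2 := by field_simp
  have e4 : (q.den : ℝ) * |j * α - γ - m| ≤ 5 / 2 := by
    rw [← abs_of_pos hd0, ← abs_mul, e1]
    refine (abs_sub _ _).trans ?_
    linarith
  rw [le_div_iff₀ hj0]
  nlinarith [abs_nonneg (j * α - γ - m)]

/-- `f_j` has Lipschitz constant `O(j²)`. -/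
lemma abs_f_sub_le (n : ℕ) (ρ : ℝ) {j : ℕ} (hj : 0 < j) (x y : ℝ) :
    |f n ρ j x - f n ρ j y| ≤ π * (n + 2) * (1 + |ρ * (ρ - 1)|) * j ^ 2 * |x - y| := by
  have sin_lip : ∀ a b : ℝ, |sin a - sin b| ≤ |a - b| := fun a b => by
    simpa [Real.dist_eq] using Real.lipschitzWith_sin.dist_le_mul a b
  have hj1 : (1 : ℝ) ≤ j := by exact_mod_cast hj
  have hn0 : (0 : ℝ) ≤ n := n.cast_nonneg
  have h1 := sin_lip (π * ((j : ℝ) * x - (ρ - 1 - x * n + x) / 2))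
    (π * ((j : ℝ) * y - (ρ - 1 - y * n + y) / 2))
  have h2 := sin_lip (π * ((j : ℝ) * x - ((ρ - 1 - x * n + x) / 2 - (x + 1 / 2))))
    (π * ((j : ℝ) * y - ((ρ - 1 - y * n + y) / 2 - (y + 1 / 2))))
  rw [show π * ((j : ℝ) * x - (ρ - 1 - x * n + x) / 2)
      - π * ((j : ℝ) * y - (ρ - 1 - y * n + y) / 2)
      = (π * (j + (n - 1) / 2)) * (x - y) by ring, abs_mul,
    abs_of_nonneg (by apply mul_nonneg pi_pos.le; linarith : 0 ≤ π * ((j : ℝ) + (n - 1) / 2))] at h1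
  rw [show π * ((j : ℝ) * x - ((ρ - 1 - x * n + x) / 2 - (x + 1 / 2)))
      - π * ((j : ℝ) * y - ((ρ - 1 - y * n + y) / 2 - (y + 1 / 2)))
      = (π * (j + (n + 1) / 2)) * (x - y) by ring, abs_mul,
    abs_of_nonneg (by positivity : 0 ≤ π * ((j : ℝ) + (n + 1) / 2))] at h2
  have b1 : (j : ℝ) + (n - 1) / 2 ≤ (n + 2) * j := by nlinarith
  have b2 : (j : ℝ) + (n + 1) / 2 ≤ (n + 2) * j ^ 2 := by
    have : (j : ℝ) ≤ j ^ 2 := by nlinarith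
    nlinarith
  unfold f
  set X1 := sin (π * ((j : ℝ) * x - (ρ - 1 - x * n + x) / 2))
  set Y1 := sin (π * ((j : ℝ) * y - (ρ - 1 - y * n + y) / 2))
  set X2 := sin (π * ((j : ℝ) * x - ((ρ - 1 - x * n + x) / 2 - (x + 1 / 2))))
  set Y2 := sin (π * ((j : ℝ) * y - ((ρ - 1 - y * n + y) / 2 - (y + 1 / 2))))
  calc |(j : ℝ) * X1 + ρ * (ρ - 1) * X2 - (j * Y1 + ρ * (ρ - 1) * Y2)|
      = |(j : ℝ) * (X1 - Y1) + ρ * (ρ - 1) * (X2 - Y2)| := by congr 1; ring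
    _ ≤ j * |X1 - Y1| + |ρ * (ρ - 1)| * |X2 - Y2| := by
        refine (abs_add_le _ _).trans ?_
        rw [abs_mul, abs_mul (ρ * (ρ - 1)), Nat.abs_cast]
    _ ≤ j * ((π * ((n + 2) * j)) * |x - y|)
          + |ρ * (ρ - 1)| * ((π * ((n + 2) * j ^ 2)) * |x - y|) := by
        gcongr
        · exact h1.trans (by gcongr)
        · exact h2.trans (by gcongr)
    _ = _ := by ring

lemma continuous_f (n : ℕ) (ρ : ℝ) (j : ℕ) : Continuous (f n ρ j) := by
  unfold f; fun_prop

/-- Near an irrational `β`, infinitely many `f_j` change sign, hence have a zero,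
at distance `O(1/j²)`. -/
lemma exists_zero_near (n : ℕ) (hn : 2 ≤ n) (ρ : ℝ) {β : ℝ} (hβ : Irrational β) (J : ℕ) :
    ∃ j : ℕ, J < j ∧ ∃ z, f n ρ j z = 0 ∧ |β - z| ≤ (6 + |ρ * (ρ - 1)|) / (j : ℝ) ^ 2 := by
  set K := ρ * (ρ - 1) with hK
  set A := 6 + |K| with hA
  have hA0 : 0 < A := by positivity
  have hn0 : (2 : ℝ) ≤ n := by exact_mod_cast hn
  -- For `j > J₁` the perturbed arguments stay within `1/2` of an integer.
  obtain ⟨J₁, hJ₁⟩ := exists_nat_gt (2 * (A * (n + 1) + 5))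
  obtain ⟨j, hj, m, hm⟩ := exists_inhom_approx hβ ((ρ - 1 - β * n + β) / 2) (max J J₁)
  have hjJ : J < j := (le_max_left _ _).trans_lt hj
  have hjJ₁ : (J₁ : ℝ) < j := by exact_mod_cast (le_max_right _ _).trans_lt hj
  have hj1 : (1 : ℝ) ≤ j := by exact_mod_cast (show 1 ≤ j by omega)
  have hj0 : (0 : ℝ) < j := by linarith
  refine ⟨j, hjJ, ?_⟩
  set δ := (j : ℝ) * β - (ρ - 1 - β * n + β) / 2 - m with hδ
  set h := A / (j : ℝ) ^ 2 with hh
  have hh0 : 0 < h := by positivity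
  -- `s` is the displacement of `jβ - r₀` when `β` moves by `h`.
  set s := h * (j + (n - 1) / 2) with hs
  have hs1 : A / j ≤ s := by
    have : A / j = h * j := by rw [hh]; field_simp
    rw [this, hs]; gcongr; linarith
  have hs2 : s ≤ A * (n + 1) / j := by
    have : A * (n + 1) / j = h * ((n + 1) * j) := by rw [hh]; field_simp
    rw [this, hs]; gcongr; nlinarith
  have hsmall : 5 / (j : ℝ) + A * (n + 1) / j ≤ 1 / 2 := by
    rw [← add_div, div_le_iff₀ hj0]; linarith
  have hδ' := abs_le.1 hm
  have hgap : (|K| + 1) / j = A / j - 5 / j := by rw [← sub_div]; congr 1; rw [hA]; ring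
  have hjK : (|K| + 1) / j * j = |K| + 1 := by field_simp
  -- The dominant term exceeds `|K|` at the perturbed points, so it determines the sign of `f_j`.
  have hpos : ∀ x : ℝ, (|K| + 1) / j ≤ x → x ≤ 1 / 2 → |K| < j * sin (π * x) := by
    intro x hx1 hx2
    have hx0 : 0 ≤ x := le_trans (by positivity) hx1
    have := Real.mul_le_sin (x := π * x) (by positivity) (by nlinarith [pi_pos])
    have e : 2 / π * (π * x) = 2 * x := by field_simp
    rw [e] at this
    have h3 : (|K| + 1) / j * j ≤ x * j := by gcongr
    have h4 : (2 * x) * j ≤ sin (π * x) * j := by gcongr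
    rw [hjK] at h3
    have := abs_nonneg K
    nlinarith
  have hf : ∀ x t : ℝ, x = β + t → ∃ w : ℝ, |w| ≤ |K| ∧
      f n ρ j x = (-1) ^ m * (j * sin (π * (δ + t * (j + (n - 1) / 2)))) + w := by
    intro x t hx
    refine ⟨K * sin (π * ((j : ℝ) * x - ((ρ - 1 - x * n + x) / 2 - (x + 1 / 2)))), ?_, ?_⟩
    · rw [abs_mul]
      exact mul_le_of_le_one_right (abs_nonneg _) (abs_sin_le_one _)
    · unfold f
      have : π * ((j : ℝ) * x - (ρ - 1 - x * n + x) / 2)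
          = π * (δ + t * (j + (n - 1) / 2)) + m * π := by
        rw [hδ, hx]; ring
      rw [this, Real.sin_add_int_mul_pi]
      ring
  obtain ⟨w₁, hw₁, h₁⟩ := hf (β + h) h rfl
  obtain ⟨w₂, hw₂, h₂⟩ := hf (β - h) (-h) (by ring)
  have p₁ := hpos (δ + s) (by linarith) (by linarith)
  have p₂ := hpos (-(δ - s)) (by linarith) (by linarith)
  rw [mul_neg, sin_neg, mul_neg] at p₂
  rw [← hs] at h₁
  rw [neg_mul, ← hs, ← sub_eq_add_neg] at h₂
  have hw₁' := abs_le.1 hw₁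
  have hw₂' := abs_le.1 hw₂
  have hle : β - h ≤ β + h := by linarith
  have hcont := (continuous_f n ρ j).continuousOn (s := Set.Icc (β - h) (β + h))
  have hz : (0 : ℝ) ∈ f n ρ j '' Set.Icc (β - h) (β + h) := by
    rcases Int.even_or_odd m with hm' | hm'
    · rw [hm'.neg_one_zpow] at h₁ h₂
      exact intermediate_value_Icc hle hcont ⟨by linarith, by linarith⟩
    · rw [hm'.neg_one_zpow] at h₁ h₂
      exact intermediate_value_Icc' hle hcont ⟨by linarith, by linarith⟩
  obtain ⟨z, ⟨hz1, hz2⟩, hz0⟩ := hz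
  exact ⟨z, hz0, abs_le.2 ⟨by linarith, by linarith⟩⟩

/-- For fixed `ε > 0`, almost every `β` lies within `ε/j²` of the zero set of `f_j` for infinitely
many `j`. -/
lemma ae_frequently_mem_cthickening (n : ℕ) (hn : 2 ≤ n) (ρ : ℝ) {ε : ℝ} (hε : 0 < ε) :
    ∀ᵐ β : ℝ, ∃ᶠ j : ℕ in Filter.atTop,
      β ∈ Metric.cthickening (ε / (j : ℝ) ^ 2) {z | f n ρ j z = 0} := by
  set A := 6 + |ρ * (ρ - 1)| with hA
  have hA0 : 0 < A := by positivity
  have hr : Filter.Tendsto (fun j : ℕ => ε / (j : ℝ) ^ 2) Filter.atTop (nhds 0) :=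
    tendsto_const_nhds.div_atTop
      ((Filter.tendsto_pow_atTop two_ne_zero).comp tendsto_natCast_atTop_atTop)
  have key := blimsup_cthickening_mul_ae_eq (volume : Measure ℝ) (fun _ => True)
    (fun j => {z | f n ρ j z = 0}) (div_pos hA0 hε) _ hr
  have hirr : ∀ᵐ β : ℝ, Irrational β := by
    have := (Set.countable_range ((↑) : ℚ → ℝ)).ae_notMem volume
    exact this
  filter_upwards [key.mem_iff, hirr] with β hβ hi
  rw [Filter.blimsup_true, Filter.blimsup_true, Filter.mem_limsup_iff_frequently_mem,
    Filter.mem_limsup_iff_frequently_mem] at hβ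
  refine hβ.1 ?_
  rw [Filter.frequently_atTop]
  intro J
  obtain ⟨j, hj, z, hz, hd⟩ := exists_zero_near n hn ρ hi J
  refine ⟨j, hj.le, Metric.mem_cthickening_of_dist_le β z _ _ hz ?_⟩
  rw [Real.dist_eq]
  refine hd.trans_eq ?_
  rw [← hA]
  field_simp

/-- For ρ ≠ 0, 1 and n ≥ 2, for Lebesgue-a.e. β ∈ (0,1), for every c > 0,
the inequality |j sin(π(jβ − r₀)) + ρ(ρ−1) sin(π(jβ − r₁))| < c, with
r₀ = (ρ − 1 − βn + β)/2 and r₁ = r₀ − (β + 1/2), has infinitely many solutions j ∈ ℕ. -/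
theorem stmt0 (n : ℕ) (hn : 2 ≤ n) (ρ : ℝ) (hρ0 : ρ ≠ 0) (hρ1 : ρ ≠ 1) :
    ∀ᵐ β ∂(volume.restrict (Set.Ioo (0:ℝ) 1)),
      ∀ c > (0:ℝ),
        {j : ℕ |
          |(j : ℝ) * Real.sin (π * ((j : ℝ) * β - (ρ - 1 - β * n + β) / 2)) +
              ρ * (ρ - 1) *
                Real.sin (π * ((j : ℝ) * β - ((ρ - 1 - β * n + β) / 2 - (β + 1 / 2))))| <
            c}.Infinite := by
  apply ae_restrict_of_ae
  have hall : ∀ᵐ β : ℝ, ∀ k : ℕ, ∃ᶠ j : ℕ in Filter.atTop,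
      β ∈ Metric.cthickening ((1 / ((k : ℝ) + 1)) / (j : ℝ) ^ 2) {z | f n ρ j z = 0} :=
    ae_all_iff.2 fun k => ae_frequently_mem_cthickening n hn ρ (by positivity)
  filter_upwards [hall] with β hβ c hc
  set C := π * (n + 2) * (1 + |ρ * (ρ - 1)|) with hC
  have hC0 : 0 < C := by have := pi_pos; positivity
  obtain ⟨k, hk⟩ := exists_nat_one_div_lt (show 0 < c / C by positivity)
  rw [← Nat.frequently_atTop_iff_infinite]
  refine ((hβ k).and_eventually (Filter.eventually_gt_atTop 0)).mono ?_
  rintro j ⟨hj, hj0⟩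
  have hj0' : (0 : ℝ) < j := by exact_mod_cast hj0
  -- The closed thickening of radius `1/((k+1)j²)` lies in the open one of radius `(c/C)/j²`.
  have hlt : (1 / ((k : ℝ) + 1)) / (j : ℝ) ^ 2 < (c / C) / (j : ℝ) ^ 2 := by gcongr
  have hmem := Metric.cthickening_subset_thickening' (by positivity) hlt _ hj
  obtain ⟨z, hz, hd⟩ := Metric.mem_thickening_iff.1 hmem
  rw [Real.dist_eq] at hd
  have hL := abs_f_sub_le n ρ hj0 β z
  rw [show f n ρ j z = 0 from hz, sub_zero, ← hC] at hL
  change |f n ρ j β| < c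
  calc |f n ρ j β| ≤ C * j ^ 2 * |β - z| := hL
    _ < C * j ^ 2 * ((c / C) / (j : ℝ) ^ 2) := by gcongr
    _ = c := by field_simp
end

section
/- For any given real numbers x and B, for either parity class A = 2ℤ (even integers) or A = 2ℤ+1 (odd integers), and for any c > 0, there exists a full Lebesgue-measure set of β ∈ ℝ such that there are infinitely many pairs (k, j) with k ∈ ℤ and j a positive integer in A satisfying ‖β/4 − (k + x)/j + (B/j²)·cos(4πk/j)‖ ≤ c/j². -/
/-!
The set of β in question contains the limsup of the `2c/j²`-neighbourhoods of the sets
`{4 ((k + x)/j - (B/j²) cos (4πk/j)) | k ∈ ℤ}`. By Cassels' lemma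
(`blimsup_cthickening_mul_ae_eq`), multiplying all radii by a fixed positive constant changes such
a limsup set only by a null set. It is therefore enough to treat one large constant in place of
`c`, and then the cosine term, being at most `|B|/j²`, is absorbed into the error.

What remains is inhomogeneous approximation with some constant along a parity class, and this
holds for every irrational `β`: writing `j = 2m + r`, it is the statement that for irrational `θ`
and any `y` there are infinitely many `m > 0` with `‖mθ - y‖ ≤ 5/m`
(`exists_inhomogeneous_approx`). To see this, take `|θ - p/q| ≤ 1/q²` with `q` large, let `n` be
the integer nearest to `qy`, and choose `m ∈ [q, 2q)` with `mp ≡ n (mod q)`.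
-/

open MeasureTheory Real

/-- Distance from a real number to the nearest integer. -/
noncomputable def distNearestInt (t : ℝ) : ℝ := |t - (round t : ℝ)|

open Filter Topology Metric

/-- An irrational number has Dirichlet approximations of arbitrarily large denominator. -/
lemma exists_rat_den_gt {θ : ℝ} (hθ : Irrational θ) (N : ℕ) :
    ∃ q : ℚ, N < q.den ∧ |θ - q| ≤ 1 / (q.den : ℝ) ^ 2 := by
  have h := (tendsto_one_div_add_atTop_nhds_zero_nat (𝕜 := ℝ)).eventually
    (hθ.eventually_forall_le_dist_cast_rat_of_den_le N)
  obtain ⟨n₀, hn₀⟩ := h.exists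
  -- Dirichlet's theorem at level `n₀ + 1` gives an error strictly below `1 / (n₀ + 1)`.
  obtain ⟨q, hq, hqn⟩ := Real.exists_rat_abs_sub_le_and_den_le θ (Nat.succ_pos n₀)
  have hd1 : (1 : ℝ) ≤ q.den := by exact_mod_cast q.pos
  have hdn : (q.den : ℝ) ≤ n₀ + 1 := by exact_mod_cast hqn
  have hn0 : (0 : ℝ) ≤ n₀ := Nat.cast_nonneg _
  push_cast at hq
  refine ⟨q, ?_, hq.trans ?_⟩
  · by_contra! hle
    have h1 := hn₀ q hle
    rw [Real.dist_eq] at h1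
    have h2 : 1 / (((n₀ : ℝ) + 1 + 1) * q.den) < 1 / ((n₀ : ℝ) + 1) :=
      one_div_lt_one_div_of_lt (by linarith) (by nlinarith)
    linarith
  · exact one_div_le_one_div_of_le (by positivity) (by nlinarith)

lemma exists_inhomogeneous_approx {θ : ℝ} (hθ : Irrational θ) (y : ℝ) (N : ℕ) :
    ∃ m : ℕ, N < m ∧ ∃ k : ℤ, |m * θ - y - k| ≤ 5 / m := by
  obtain ⟨q, hN, hq⟩ := exists_rat_den_gt hθ N
  obtain ⟨a, b, hab⟩ : IsCoprime q.num (q.den : ℤ) := by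
    rw [Int.isCoprime_iff_gcd_eq_one]
    exact q.reduced
  set d : ℤ := (q.den : ℤ) with hd
  have hdpos : 0 < d := Int.natCast_pos.2 q.pos
  set n : ℤ := round (d * y : ℝ) with hn
  have hround : |(d * y : ℝ) - n| ≤ 1 / 2 := abs_sub_round _
  have hmod0 := Int.emod_nonneg (n * a) hdpos.ne'
  have hmod1 := Int.emod_lt_of_pos (n * a) hdpos
  obtain ⟨m, hm⟩ := Int.eq_ofNat_of_zero_le (show 0 ≤ d + n * a % d by omega)
  obtain ⟨K, hK⟩ : ∃ K : ℤ, (m : ℤ) * q.num = n + d * K := by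
    refine ⟨q.num - (n * a / d) * q.num - n * b, ?_⟩
    have := Int.emod_add_mul_ediv (n * a) d
    rw [← hm]
    linear_combination n * hab + q.num * this
  have hdR : (0 : ℝ) < d := by exact_mod_cast hdpos
  have hdd : ((q.den : ℕ) : ℝ) = d := by rw [hd]; simp
  have hqd : (q : ℝ) * d = q.num := by
    rw [← hdd]; exact_mod_cast Rat.mul_den_eq_num q
  have hKR : (m : ℝ) * q.num = n + d * K := by exact_mod_cast hK
  have hm1 : (d : ℝ) ≤ m := by
    have : d ≤ (m : ℤ) := by omega
    exact_mod_cast this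
  have hm2 : (m : ℝ) ≤ 2 * d := by
    have : (m : ℤ) ≤ 2 * d := by omega
    exact_mod_cast this
  refine ⟨m, by omega, K, ?_⟩
  have key : m * θ - y - K = m * (θ - q) - (d * y - n) / d := by
    field_simp
    linear_combination hKR + m * hqd
  rw [hdd] at hq
  have h1 : |m * (θ - q)| ≤ 2 / d := by
    rw [abs_mul, Nat.abs_cast]
    calc (m : ℝ) * |θ - q| ≤ (2 * d) * (1 / (d : ℝ) ^ 2) := by gcongr
      _ = 2 / d := by field_simp
  have h2 : |(d * y - n) / (d : ℝ)| ≤ (1 / 2) / d := by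
    rw [abs_div, abs_of_pos hdR]
    gcongr
  calc |m * θ - y - K| ≤ 2 / d + (1 / 2) / d := by
        rw [key]; exact (abs_sub _ _).trans (add_le_add h1 h2)
    _ = 5 / (2 * d) := by field_simp; norm_num
    _ ≤ 5 / m := by
        have : (0 : ℝ) < m := by linarith
        gcongr

lemma distNearestInt_le_abs (t : ℝ) : distNearestInt t ≤ |t| := by
  simpa [distNearestInt] using round_le t 0

/-- The centres of the intervals of `β` belonging to a given `j`; integer translates are included
because `k` ranges over all of `ℤ`. -/
noncomputable def centres (x B : ℝ) (j : ℕ) : Set ℝ :=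
  Set.range fun k : ℤ =>
    4 * (((k : ℝ) + x) / (j : ℝ) - B / (j : ℝ) ^ 2 * Real.cos (4 * π * (k : ℝ) / (j : ℝ)))

lemma exists_mem_centres_dist_le (x B : ℝ) {r : ℕ} (hr : r = 0 ∨ r = 1) {β : ℝ}
    (hβ : Irrational β) (N : ℕ) :
    ∃ j : ℕ, N ≤ j ∧ (0 < j ∧ j % 2 = r) ∧
      ∃ s ∈ centres x B j, dist β s ≤ (60 + 4 * |B|) / (j : ℝ) ^ 2 := by
  have hθ : Irrational (β / 2) := by exact_mod_cast hβ.div_natCast (m := 2) (by norm_num)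
  obtain ⟨m, hm, k, hk⟩ := exists_inhomogeneous_approx hθ (x - r * β / 4) N
  obtain ⟨j, hj⟩ : ∃ j, j = 2 * m + r := ⟨_, rfl⟩
  refine ⟨j, by omega, ⟨by omega, by omega⟩, _, ⟨k, rfl⟩, ?_⟩
  have hmR : (0 : ℝ) < m := by exact_mod_cast (show 0 < m by omega)
  have hjR : (j : ℝ) = 2 * m + r := by rw [hj]; push_cast; rfl
  have hj0 : (0 : ℝ) < j := by exact_mod_cast (show 0 < j by omega)
  have hj3 : (j : ℝ) ≤ 3 * m := by exact_mod_cast (show j ≤ 3 * m by omega)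
  set C := Real.cos (4 * π * (k : ℝ) / (j : ℝ)) with hC
  have hC1 : |C| ≤ 1 := Real.abs_cos_le_one _
  have e : β - 4 * (((k : ℝ) + x) / j - B / (j : ℝ) ^ 2 * C)
      = 4 / j * (m * (β / 2) - (x - r * β / 4) - k) + 4 * (B * C) / (j : ℝ) ^ 2 := by
    field_simp
    rw [hjR]; ring
  have h1 : |4 / j * (m * (β / 2) - (x - r * β / 4) - k)| ≤ 60 / (j : ℝ) ^ 2 := by
    rw [abs_mul, abs_of_pos (by positivity : (0 : ℝ) < 4 / j)]
    calc 4 / (j : ℝ) * |m * (β / 2) - (x - r * β / 4) - k| ≤ 4 / j * (5 / m) := by gcongr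
      _ ≤ 4 / j * (15 / j) := by
          gcongr ?_ * ?_
          rw [div_le_div_iff₀ hmR hj0]; linarith
      _ = 60 / (j : ℝ) ^ 2 := by field_simp; norm_num
  have h2 : |4 * (B * C) / (j : ℝ) ^ 2| ≤ 4 * |B| / (j : ℝ) ^ 2 := by
    rw [abs_div, abs_of_pos (by positivity : (0 : ℝ) < (j : ℝ) ^ 2), abs_mul, abs_mul,
      abs_of_pos (by norm_num : (0 : ℝ) < 4)]
    gcongr
    exact mul_le_of_le_one_right (abs_nonneg _) hC1
  rw [Real.dist_eq, e, add_div]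
  exact (abs_add_le _ _).trans (add_le_add h1 h2)

lemma mem_blimsup_iff_frequently {s : ℕ → Set ℝ} {p : ℕ → Prop} {β : ℝ} :
    β ∈ blimsup s atTop p ↔ ∃ᶠ j in atTop, p j ∧ β ∈ s j := by
  rw [blimsup_eq_limsup, mem_limsup_iff_frequently_mem, frequently_inf_principal]
  rfl

/-- For any reals x, B, for either parity class (encoded by a residue
r ∈ {0,1} modulo 2), and for any c > 0, for Lebesgue-a.e. β ∈ ℝ there are infinitely many
pairs (k, j) with k ∈ ℤ and j a positive integer with j ≡ r (mod 2), satisfying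
‖β/4 − (k + x)/j + (B/j²)·cos(4πk/j)‖ ≤ c/j². -/
theorem stmt1 (x B : ℝ) (r : ℕ) (hr : r = 0 ∨ r = 1) (c : ℝ) (hc : 0 < c) :
    ∀ᵐ β : ℝ,
      {p : ℤ × ℕ | 0 < p.2 ∧ p.2 % 2 = r ∧
        distNearestInt (β / 4 - ((p.1 : ℝ) + x) / (p.2 : ℝ) +
            B / (p.2 : ℝ) ^ 2 * Real.cos (4 * π * (p.1 : ℝ) / (p.2 : ℝ))) ≤
          c / (p.2 : ℝ) ^ 2}.Infinite := by
  obtain ⟨K, hK⟩ : ∃ K : ℝ, K = 60 + 4 * |B| := ⟨_, rfl⟩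
  have hK0 : 0 < K := by rw [hK]; positivity
  have hlim : Tendsto (fun j : ℕ => K / (j : ℝ) ^ 2) atTop (𝓝 0) :=
    tendsto_const_nhds.div_atTop
      ((tendsto_pow_atTop two_ne_zero).comp tendsto_natCast_atTop_atTop)
  -- This scaling turns the radii `K / j ^ 2` into `2 * c / j ^ 2`; the slack up to `4 * c / j ^ 2`
  -- replaces closed thickenings by open ones, where membership exhibits a centre.
  have hcassels := blimsup_cthickening_mul_ae_eq (volume : Measure ℝ)
    (fun j => 0 < j ∧ j % 2 = r) (centres x B) (M := 2 * c / K) (by positivity) _ hlim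
  have hirr : ∀ᵐ β : ℝ, Irrational β :=
    (Set.countable_range ((↑) : ℚ → ℝ)).ae_notMem volume
  filter_upwards [hcassels.mem_iff, hirr] with β hiff hβ
  have hlarge : β ∈ blimsup (fun j : ℕ => cthickening (K / (j : ℝ) ^ 2) (centres x B j)) atTop
      (fun j => 0 < j ∧ j % 2 = r) := by
    rw [mem_blimsup_iff_frequently, frequently_atTop]
    intro N
    obtain ⟨j, hNj, hj, s, hs, hd⟩ := exists_mem_centres_dist_le x B hr hβ N
    exact ⟨j, hNj, hj, mem_cthickening_of_dist_le _ s _ _ hs (hK ▸ hd)⟩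
  have hsmall := hiff.2 hlarge
  rw [mem_blimsup_iff_frequently, frequently_atTop] at hsmall
  refine Set.Infinite.of_image Prod.snd (Set.infinite_of_not_bddAbove ?_)
  rintro ⟨N, hN⟩
  obtain ⟨j, hNj, ⟨hj0, hjr⟩, hj⟩ := hsmall (N + 1)
  have hjR : (0 : ℝ) < j := by exact_mod_cast hj0
  have hrad : 2 * c / K * (K / (j : ℝ) ^ 2) < 4 * (c / (j : ℝ) ^ 2) := by
    have : 2 * c / K * (K / (j : ℝ) ^ 2) = 2 * (c / (j : ℝ) ^ 2) := by field_simp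
    rw [this]
    have : 0 < c / (j : ℝ) ^ 2 := by positivity
    linarith
  obtain ⟨s, ⟨k, rfl⟩, hd⟩ := mem_thickening_iff.1
    (cthickening_subset_thickening' (by positivity) hrad _ hj)
  have hle : j ≤ N := by
    refine hN ⟨(k, j), ⟨hj0, hjr, (distNearestInt_le_abs _).trans ?_⟩, rfl⟩
    rw [Real.dist_eq, abs_lt] at hd
    dsimp only at hd ⊢
    rw [abs_le]
    constructor <;> linarith [hd.1, hd.2]
  omega
end

section
/- Let (γ_q)_{q∈ℕ} be any sequence of real numbers and let ψ : ℕ → (0,∞) be monotone decreasing. Suppose there exist ε > 0 and an integer k ≥ 2 such that Σ_{q≥1} ψ(q)/√(log q · (log log q) · (log log log q) ⋯ (log^{(k−1)} q) · (log^{(k)} q)^{1+ε}) = ∞, where log^{(m)} denotes the m-fold iterated logarithm. Then the set W(ψ,γ) = { β ∈ [0,1] : ‖β − (a + γ_q)/q‖ < ψ(q)/q for infinitely many (a,q) ∈ ℤ × ℕ } has full Lebesgue measure: m(W(ψ,γ)) = 1. -/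
/-!
Let `w(q) = 2 ^ (-Ω(q))`, where `Ω` counts prime factors with multiplicity, and consider for a
point `β` the weighted count `F(β) = ∑_{n < q ≤ Q} w(q) 1[‖qβ - γ_q‖ < ψ(q)]`. If `ψ ≤ 1/2`, its
mean over `[0, 1]` is `2M` with `M = ∑_{n < q ≤ Q} w(q) ψ(q)`. For `q ≤ r` the covariance of the
events with indices `q` and `r` is at most `2 ψ(r) gcd(q, r) / r`, whatever the shifts `γ_q`, `γ_r`
are (`integral_nearInd_mul_le`). Hence the variance of `F` is at most a constant times
`∑_{r ≤ Q} ψ(r) w(r) G(r)`, where `G(r) = (1/r) ∑_{q ≤ r} w(q) gcd(q, r)` (`gcdAvg`).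

The weights are chosen so that two things hold. First, `w(r) G(r)` is at most a constant times
`w(r)` on average over `r ≤ N` (`sum_omegaWeight_mul_gcdAvg_le`); this rests on the estimates
`∑_{n ≤ N} z ^ Ω(n) ≪ N (log N) ^ (z - 1)` for `z = 1/2, 1/4` and the matching lower bound for
`z = 1/2`. By partial summation, the decrease of `ψ` turns this into a variance bound linear in the
mean. Second, `∑_{q ≤ N} w(q)` has the order of magnitude of `∑_{q ≤ N} (log q) ^ (-1/2)`, so again
by partial summation the mean diverges with `∑ ψ(q) / √(log q)`, hence under the assumption of the
theorem. Chebyshev's inequality then shows that for each `n` almost every `β` meets one of the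
events with `q > n`.
-/

open MeasureTheory Real

/-- The `m`-fold iterated natural logarithm. -/
noncomputable def iterLog : ℕ → ℝ → ℝ
  | 0, x => x
  | m + 1, x => Real.log (iterLog m x)

section

open Finset ArithmeticFunction

/-! ### The weights `z ^ Ω(n)` and their logarithmic averages -/

/-- The completely multiplicative weight `n ↦ z ^ Ω(n)`. -/
noncomputable def omegaWeight (z : ℝ) (n : ℕ) : ℝ := z ^ ArithmeticFunction.cardFactors n

/-- The summatory function `∑_{n ≤ N} z ^ Ω(n)`. -/
noncomputable def omegaSum (z : ℝ) (N : ℕ) : ℝ := ∑ n ∈ Ioc 0 N, omegaWeight z n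

/-- The logarithmic average `∑_{n ≤ N} z ^ Ω(n) / n`. -/
noncomputable def omegaLogSum (z : ℝ) (N : ℕ) : ℝ := ∑ n ∈ Ioc 0 N, omegaWeight z n / n

/-- `1 + log n`, a version of the logarithm which is at least `1` for every `n`, as `log 0 = 0`. -/
noncomputable def ell (n : ℕ) : ℝ := 1 + Real.log n

lemma one_le_ell (n : ℕ) : 1 ≤ ell n := by
  have := Real.log_natCast_nonneg n
  unfold ell; linarith

lemma ell_pos (n : ℕ) : 0 < ell n := lt_of_lt_of_le one_pos (one_le_ell n)

lemma omegaWeight_nonneg {z : ℝ} (hz : 0 ≤ z) (n : ℕ) : 0 ≤ omegaWeight z n := pow_nonneg hz _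

lemma omegaWeight_le_one {z : ℝ} (hz : 0 ≤ z) (hz1 : z ≤ 1) (n : ℕ) : omegaWeight z n ≤ 1 :=
  pow_le_one₀ hz hz1

lemma omegaWeight_mul (z : ℝ) {m n : ℕ} (hm : m ≠ 0) (hn : n ≠ 0) :
    omegaWeight z (m * n) = omegaWeight z m * omegaWeight z n := by
  simp [omegaWeight, cardFactors_mul hm hn, pow_add]

/-- Dirichlet's rearrangement of a sum over pairs `(d, m)` with `d * m ≤ N`. -/
lemma sum_divisors_eq_sum_sum (u : ℕ → ℕ → ℝ) (N : ℕ) :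
    ∑ n ∈ Ioc 0 N, ∑ d ∈ n.divisors, u d (n / d) =
      ∑ d ∈ Ioc 0 N, ∑ m ∈ Ioc 0 (N / d), u d m := by
  rw [sum_sigma', sum_sigma']
  refine sum_nbij' (fun x => ⟨x.2, x.1 / x.2⟩) (fun x => ⟨x.1 * x.2, x.1⟩) ?_ ?_ ?_ ?_ ?_
  · rintro ⟨n, d⟩ h
    simp only [mem_sigma, mem_Ioc, Nat.mem_divisors] at h ⊢
    obtain ⟨⟨h0, hN⟩, hd, hn⟩ := h
    have hd0 : 0 < d := Nat.pos_of_dvd_of_pos hd h0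
    exact ⟨⟨hd0, (Nat.le_of_dvd h0 hd).trans hN⟩, Nat.div_pos (Nat.le_of_dvd h0 hd) hd0,
      Nat.div_le_div_right hN⟩
  · rintro ⟨d, m⟩ h
    simp only [mem_sigma, mem_Ioc, Nat.mem_divisors] at h ⊢
    obtain ⟨⟨h0, hN⟩, hm, hmN⟩ := h
    rw [Nat.le_div_iff_mul_le h0] at hmN
    refine ⟨⟨Nat.mul_pos h0 hm, by linarith [mul_comm d m]⟩, dvd_mul_right _ _, ?_⟩
    positivity
  · rintro ⟨n, d⟩ h
    simp only [mem_sigma, mem_Ioc, Nat.mem_divisors] at h ⊢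
    simp [Nat.mul_div_cancel' h.2.1]
  · rintro ⟨d, m⟩ h
    simp only [mem_sigma, mem_Ioc] at h ⊢
    simp [Nat.mul_div_cancel_left _ h.1.1]
  · rintro ⟨n, d⟩ h
    rfl

lemma card_divisors_le_two_pow {n : ℕ} (hn : n ≠ 0) :
    n.divisors.card ≤ 2 ^ cardFactors n := by
  rw [Nat.card_divisors hn, cardFactors_eq_sum_factorization, Finsupp.sum, ← prod_pow_eq_pow_sum]
  refine prod_le_prod (fun _ _ => by positivity) fun p _ => ?_
  exact Nat.lt_two_pow_self

lemma card_divisors_eq_two_pow {n : ℕ} (hn : Squarefree n) :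
    n.divisors.card = 2 ^ cardFactors n := by
  rw [Nat.card_divisors hn.ne_zero, cardFactors_eq_sum_factorization, Finsupp.sum,
    ← prod_pow_eq_pow_sum]
  refine prod_congr rfl fun p hp => ?_
  have h1 := (Nat.squarefree_iff_factorization_le_one hn.ne_zero).1 hn p
  have h2 : n.factorization p ≠ 0 := Finsupp.mem_support_iff.1 hp
  have : n.factorization p = 1 := by omega
  simp [this]

/-- The Dirichlet square of `z ^ Ω`, weighted by `1 / n`. -/
lemma sum_card_divisors_mul (z : ℝ) (N : ℕ) :
    ∑ n ∈ Ioc 0 N, (n.divisors.card : ℝ) * omegaWeight z n / n =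
      ∑ d ∈ Ioc 0 N, ∑ m ∈ Ioc 0 (N / d), omegaWeight z d / d * (omegaWeight z m / m) := by
  rw [← sum_divisors_eq_sum_sum (fun d m => omegaWeight z d / d * (omegaWeight z m / m))]
  refine sum_congr rfl fun n hn => ?_
  have h0 : n ≠ 0 := by simp at hn; omega
  rw [mul_div_assoc, ← nsmul_eq_mul, ← sum_const]
  refine sum_congr rfl fun d hd => ?_
  obtain ⟨e, rfl⟩ := Nat.dvd_of_mem_divisors hd
  have hd0 : d ≠ 0 := by rintro rfl; simp at h0
  have he0 : e ≠ 0 := by rintro rfl; simp at h0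
  rw [Nat.mul_div_cancel_left _ (Nat.pos_of_ne_zero hd0), omegaWeight_mul z hd0 he0]
  push_cast
  field_simp

/-- Squaring the average doubles `z`, since the number of divisors of `n` is at most `2 ^ Ω(n)`. Starting
from the harmonic sum `z = 1`, this yields upper bounds for `z = 1/2` and `z = 1/4`. -/
lemma omegaLogSum_sq_le {z : ℝ} (hz : 0 ≤ z) (N : ℕ) :
    omegaLogSum z N ^ 2 ≤ omegaLogSum (2 * z) (N ^ 2) := by
  have hnn : ∀ n : ℕ, 0 ≤ omegaWeight z n / n := fun n =>
    div_nonneg (omegaWeight_nonneg hz n) (Nat.cast_nonneg n)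
  calc omegaLogSum z N ^ 2
      = ∑ d ∈ Ioc 0 N, ∑ m ∈ Ioc 0 N, omegaWeight z d / d * (omegaWeight z m / m) := by
        rw [omegaLogSum, sq, sum_mul_sum]
    _ ≤ ∑ d ∈ Ioc 0 N, ∑ m ∈ Ioc 0 (N ^ 2 / d), omegaWeight z d / d * (omegaWeight z m / m) := by
        refine sum_le_sum fun d hd => sum_le_sum_of_subset_of_nonneg ?_ ?_
        · refine Ioc_subset_Ioc_right ?_
          simp only [mem_Ioc] at hd
          rw [Nat.le_div_iff_mul_le hd.1, sq]
          exact Nat.mul_le_mul_left _ hd.2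
        · intro i _ _
          exact mul_nonneg (hnn _) (hnn _)
    _ ≤ ∑ d ∈ Ioc 0 (N ^ 2), ∑ m ∈ Ioc 0 (N ^ 2 / d),
          omegaWeight z d / d * (omegaWeight z m / m) := by
        refine sum_le_sum_of_subset_of_nonneg (Ioc_subset_Ioc_right ?_) ?_
        · exact Nat.le_self_pow two_ne_zero N
        · intro i _ _
          exact sum_nonneg fun j _ => mul_nonneg (hnn _) (hnn _)
    _ = ∑ n ∈ Ioc 0 (N ^ 2), (n.divisors.card : ℝ) * omegaWeight z n / n :=
        (sum_card_divisors_mul z _).symm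
    _ ≤ omegaLogSum (2 * z) (N ^ 2) := by
        refine sum_le_sum fun n hn => ?_
        have h0 : n ≠ 0 := by simp at hn; omega
        gcongr
        rw [omegaWeight, omegaWeight, mul_pow]
        gcongr
        exact_mod_cast card_divisors_le_two_pow h0

lemma omegaLogSum_one (N : ℕ) : omegaLogSum 1 N = harmonic N := by
  rw [harmonic_eq_sum_Icc]
  push_cast
  simp [omegaLogSum, omegaWeight, ← Finset.Icc_add_one_left_eq_Ioc]

lemma ell_sq (N : ℕ) : ell (N ^ 2) ≤ 2 * ell N := by
  simp only [ell]; push_cast; rw [Real.log_pow]; push_cast; linarith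

lemma omegaLogSum_half_le (N : ℕ) : omegaLogSum (1 / 2) N ≤ 2 * √(ell N) := by
  have h := omegaLogSum_sq_le (z := 1 / 2) (by norm_num) N
  rw [show (2 : ℝ) * (1 / 2) = 1 by norm_num, omegaLogSum_one] at h
  have h2 : (harmonic (N ^ 2) : ℝ) ≤ ell (N ^ 2) := harmonic_le_one_add_log _
  have h3 := ell_sq N
  refine abs_le_of_sq_le_sq' ?_ (by positivity) |>.2
  rw [mul_pow, Real.sq_sqrt (ell_pos N).le]
  linarith [ell_pos N]

lemma omegaLogSum_quarter_le (N : ℕ) : omegaLogSum (1 / 4) N ≤ 2 * √√(ell N) := by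
  have h := omegaLogSum_sq_le (z := 1 / 4) (by norm_num) N
  rw [show (2 : ℝ) * (1 / 4) = 1 / 2 by norm_num] at h
  have h2 := omegaLogSum_half_le (N ^ 2)
  have h3 : √(ell (N ^ 2)) ≤ 2 * √(ell N) := by
    rw [Real.sqrt_le_left (by positivity), mul_pow, Real.sq_sqrt (ell_pos N).le]
    linarith [ell_pos N, ell_sq N]
  refine abs_le_of_sq_le_sq' ?_ (by positivity) |>.2
  rw [mul_pow, Real.sq_sqrt (by positivity)]
  linarith

/-- Lower bound for the logarithmic average, coming from the squarefree numbers: writing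
`n = k² a` with `a` squarefree bounds the harmonic sum by `∑ 1/k²` times the sum over `a`. -/
lemma harmonic_le_omegaLogSum_sq (N : ℕ) : (harmonic N : ℝ) ≤ 2 * omegaLogSum (1 / 2) N ^ 2 := by
  have hnn : ∀ n : ℕ, 0 ≤ omegaWeight (1 / 2) n / n := fun n =>
    div_nonneg (omegaWeight_nonneg (by norm_num) n) (Nat.cast_nonneg n)
  have h1 : ∑ n ∈ Ioc 0 N with Squarefree n, (1 : ℝ) / n ≤ omegaLogSum (1 / 2) N ^ 2 := by
    calc ∑ n ∈ Ioc 0 N with Squarefree n, (1 : ℝ) / n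
        = ∑ n ∈ Ioc 0 N with Squarefree n,
            (n.divisors.card : ℝ) * omegaWeight (1 / 2) n / n := by
          refine sum_congr rfl fun n hn => ?_
          rw [card_divisors_eq_two_pow (mem_filter.1 hn).2, omegaWeight]
          push_cast
          rw [← mul_pow]; norm_num
      _ ≤ ∑ n ∈ Ioc 0 N, (n.divisors.card : ℝ) * omegaWeight (1 / 2) n / n := by
          refine sum_le_sum_of_subset_of_nonneg (filter_subset _ _) fun n _ _ => ?_
          rw [mul_div_assoc]
          exact mul_nonneg (Nat.cast_nonneg _) (hnn n)
      _ = _ := sum_card_divisors_mul _ _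
      _ ≤ ∑ d ∈ Ioc 0 N, ∑ m ∈ Ioc 0 N,
            omegaWeight (1 / 2) d / d * (omegaWeight (1 / 2) m / m) := by
          refine sum_le_sum fun d hd => sum_le_sum_of_subset_of_nonneg
            (Ioc_subset_Ioc_right (Nat.div_le_self _ _)) fun i _ _ => mul_nonneg (hnn _) (hnn _)
      _ = omegaLogSum (1 / 2) N ^ 2 := by rw [omegaLogSum, sq, sum_mul_sum]
  have h2 : ∑ k ∈ Ioc 0 N, (1 : ℝ) / (k : ℝ) ^ 2 ≤ 2 := by
    rcases Nat.eq_zero_or_pos N with rfl | hN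
    · simp
    have h := sum_Ioc_inv_sq_le_sub (α := ℝ) one_ne_zero hN
    rw [← Finset.Ioc_union_Ioc_eq_Ioc zero_le_one hN, sum_union (by
      rw [Finset.disjoint_left]; intro a; simp; omega)]
    simp only [one_div]
    have : (0 : ℝ) ≤ (N : ℝ)⁻¹ := by positivity
    rw [show Ioc 0 1 = {1} from rfl, sum_singleton]
    simp at h ⊢
    linarith
  have h3 : (harmonic N : ℝ) ≤ (∑ k ∈ Ioc 0 N, (1 : ℝ) / (k : ℝ) ^ 2) *
      ∑ n ∈ Ioc 0 N with Squarefree n, (1 : ℝ) / n := by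
    rw [← omegaLogSum_one, omegaLogSum, sum_mul_sum, ← sum_product']
    choose A B hAB hA using Nat.sq_mul_squarefree
    have hinj : Set.InjOn (fun n => (B n, A n)) (Ioc 0 N : Set ℕ) := by
      intro x _ y _ hxy
      simp only [Prod.mk.injEq] at hxy
      rw [← hAB x, ← hAB y, hxy.1, hxy.2]
    calc ∑ n ∈ Ioc 0 N, omegaWeight 1 n / n
        = ∑ x ∈ (Ioc 0 N).image (fun n => (B n, A n)), (1 : ℝ) / (x.1 : ℝ) ^ 2 * (1 / x.2) := by
          rw [sum_image hinj]
          refine sum_congr rfl fun n _ => ?_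
          rw [omegaWeight, one_pow, one_div_mul_one_div]; congr 1; exact_mod_cast (hAB n).symm
      _ ≤ _ := by
          refine sum_le_sum_of_subset_of_nonneg ?_ fun _ _ _ => by positivity
          intro x hx
          obtain ⟨n, hn, rfl⟩ := mem_image.1 hx
          simp only [mem_Ioc, mem_product, mem_filter] at hn ⊢
          have hn' := hAB n
          have hA0 : A n ≠ 0 := (hA n).ne_zero
          have hB0 : B n ≠ 0 := by intro h; rw [h] at hn'; simp at hn'; omega
          refine ⟨⟨Nat.pos_of_ne_zero hB0, ?_⟩, ⟨Nat.pos_of_ne_zero hA0, ?_⟩, hA n⟩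
          · refine le_trans ?_ hn.2
            conv_rhs => rw [← hn']
            calc B n ≤ B n ^ 2 := Nat.le_self_pow two_ne_zero _
              _ ≤ B n ^ 2 * A n := Nat.le_mul_of_pos_right _ (Nat.pos_of_ne_zero hA0)
          · refine le_trans ?_ hn.2
            conv_rhs => rw [← hn']
            exact Nat.le_mul_of_pos_left _ (by positivity)
  have h4 : 0 ≤ ∑ n ∈ Ioc 0 N with Squarefree n, (1 : ℝ) / n :=
    sum_nonneg fun _ _ => by positivity
  nlinarith

/-! ### Mean values of `z ^ Ω(n)` -/

/-- Summing `log n = ∑_{d ∣ n} Λ(d)` against the completely multiplicative weight. -/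
lemma sum_omegaWeight_mul_log (z : ℝ) (N : ℕ) :
    ∑ n ∈ Ioc 0 N, omegaWeight z n * Real.log n =
      ∑ m ∈ Ioc 0 N, ∑ d ∈ Ioc 0 (N / m), omegaWeight z m * (omegaWeight z d * vonMangoldt d) := by
  rw [← sum_divisors_eq_sum_sum
    (fun m d => omegaWeight z m * (omegaWeight z d * vonMangoldt d))]
  refine sum_congr rfl fun n hn => ?_
  have h0 : n ≠ 0 := by simp at hn; omega
  rw [← vonMangoldt_sum, mul_sum, ← Nat.sum_div_divisors n (fun d => omegaWeight z n * vonMangoldt d)]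
  refine sum_congr rfl fun d hd => ?_
  obtain ⟨e, rfl⟩ := Nat.dvd_of_mem_divisors hd
  have hd0 : d ≠ 0 := by rintro rfl; simp at h0
  have he0 : e ≠ 0 := by rintro rfl; simp at h0
  rw [Nat.mul_div_cancel_left _ (Nat.pos_of_ne_zero hd0), omegaWeight_mul z hd0 he0]
  ring

/-- The passage from logarithmic averages to summatory functions: `log N` is split as
`log n + log (N / n)`, and the contribution of `log n` is controlled by Chebyshev's bound
`∑_{d ≤ x} Λ(d) ≪ x`. -/
lemma omegaSum_le {z : ℝ} (hz : 0 ≤ z) (hz1 : z ≤ 1) (N : ℕ) :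
    omegaSum z N * ell N ≤ (Real.log 4 + 6) * N * omegaLogSum z N := by
  have hw := omegaWeight_nonneg hz
  have h1 : ∑ n ∈ Ioc 0 N, omegaWeight z n * Real.log n ≤
      (Real.log 4 + 4) * N * omegaLogSum z N := by
    rw [sum_omegaWeight_mul_log, omegaLogSum, mul_sum]
    refine sum_le_sum fun m hm => ?_
    have hm0 : (0 : ℝ) < m := by simp at hm; exact_mod_cast hm.1
    have h2 : ∑ d ∈ Ioc 0 (N / m), vonMangoldt d ≤ (Real.log 4 + 4) * (N / m) := by
      have h := Chebyshev.psi_le_const_mul_self (x := (N : ℝ) / m) (by positivity)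
      rwa [Chebyshev.psi, Nat.floor_div_natCast, Nat.floor_natCast] at h
    calc ∑ d ∈ Ioc 0 (N / m), omegaWeight z m * (omegaWeight z d * vonMangoldt d)
        ≤ ∑ d ∈ Ioc 0 (N / m), omegaWeight z m * vonMangoldt d := by
          refine sum_le_sum fun d _ => mul_le_mul_of_nonneg_left ?_ (hw m)
          exact mul_le_of_le_one_left vonMangoldt_nonneg (omegaWeight_le_one hz hz1 d)
      _ = omegaWeight z m * ∑ d ∈ Ioc 0 (N / m), vonMangoldt d := by rw [mul_sum]
      _ ≤ omegaWeight z m * ((Real.log 4 + 4) * (N / m)) := by gcongr; exact hw m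
      _ = _ := by ring
  have h2 : omegaSum z N * ell N ≤
      (∑ n ∈ Ioc 0 N, omegaWeight z n * Real.log n) + 2 * N * omegaLogSum z N := by
    rw [omegaSum, omegaLogSum, sum_mul, mul_sum, ← sum_add_distrib]
    refine sum_le_sum fun n hn => ?_
    simp only [mem_Ioc] at hn
    have hn0 : (0 : ℝ) < n := by exact_mod_cast hn.1
    have hN : (1 : ℝ) ≤ N / n := by rw [one_le_div hn0]; exact_mod_cast hn.2
    have hN0 : (0 : ℝ) < N := by exact_mod_cast hn.1.trans_le hn.2
    have hlog : Real.log N = Real.log n + Real.log (N / n) := by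
      rw [Real.log_div hN0.ne' hn0.ne']; ring
    have h3 := Real.log_le_sub_one_of_pos (lt_of_lt_of_le one_pos hN)
    calc omegaWeight z n * ell N ≤ omegaWeight z n * (Real.log n + 2 * (N / n)) := by
          gcongr
          · exact hw n
          · rw [ell, hlog]; linarith
      _ = _ := by ring
  linarith

lemma omegaSum_half_le : ∃ C : ℝ, 0 < C ∧ ∀ N : ℕ, omegaSum (1 / 2) N * √(ell N) ≤ C * N := by
  have h4 : 0 < Real.log 4 := Real.log_pos (by norm_num)
  refine ⟨(Real.log 4 + 6) * 2, by positivity, fun N => ?_⟩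
  have h1 := omegaSum_le (z := 1 / 2) (by norm_num) (by norm_num) N
  have h2 := omegaLogSum_half_le N
  have hs : 0 < √(ell N) := Real.sqrt_pos.2 (ell_pos N)
  have hss : √(ell N) * √(ell N) = ell N := Real.mul_self_sqrt (ell_pos N).le
  refine le_of_mul_le_mul_right ?_ hs
  calc omegaSum (1 / 2) N * √(ell N) * √(ell N) = omegaSum (1 / 2) N * ell N := by
        rw [mul_assoc, hss]
    _ ≤ _ := h1
    _ ≤ (Real.log 4 + 6) * N * (2 * √(ell N)) := by gcongr
    _ = _ := by ring

lemma omegaSum_quarter_le :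
    ∃ C : ℝ, 0 < C ∧ ∀ N : ℕ, omegaSum (1 / 4) N * √√(ell N) ^ 3 ≤ C * N := by
  have h4 : 0 < Real.log 4 := Real.log_pos (by norm_num)
  refine ⟨(Real.log 4 + 6) * 2, by positivity, fun N => ?_⟩
  have h1 := omegaSum_le (z := 1 / 4) (by norm_num) (by norm_num) N
  have h2 := omegaLogSum_quarter_le N
  have hs : 0 < √√(ell N) := Real.sqrt_pos.2 (Real.sqrt_pos.2 (ell_pos N))
  have hss : √√(ell N) ^ 3 * √√(ell N) = ell N := by
    rw [← pow_succ, show 3 + 1 = 2 * 2 by norm_num, pow_mul, Real.sq_sqrt (Real.sqrt_nonneg _),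
      Real.sq_sqrt (ell_pos N).le]
  refine le_of_mul_le_mul_right ?_ hs
  calc omegaSum (1 / 4) N * √√(ell N) ^ 3 * √√(ell N) = omegaSum (1 / 4) N * ell N := by
        rw [mul_assoc, hss]
    _ ≤ _ := h1
    _ ≤ (Real.log 4 + 6) * N * (2 * √√(ell N)) := by gcongr
    _ = _ := by ring

/-- Chebyshev's lower bound for `θ`, on the whole range where `θ` does not vanish. -/
lemma exists_mul_le_theta : ∃ c : ℝ, 0 < c ∧ ∀ x : ℝ, 2 ≤ x → c * x ≤ Chebyshev.theta x := by
  have hl2 : 0 < Real.log 2 := Real.log_pos (by norm_num)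
  have hO : (fun x : ℝ => Real.log 2 + Real.log (x + 2) + 2 * √x * Real.log x)
      =o[Filter.atTop] (fun x : ℝ => x) := by
    refine ((Asymptotics.isLittleO_const_id_atTop _).add ?_).add ?_
    · have h1 : (fun x : ℝ => Real.log (x + 2)) =o[Filter.atTop] (fun x : ℝ => x + 2) :=
        Real.isLittleO_log_id_atTop.comp_tendsto
          (Filter.tendsto_atTop_add_const_right _ 2 Filter.tendsto_id)
      refine h1.trans_isBigO ?_
      refine (Asymptotics.isBigO_refl _ _).add ?_
      exact (Asymptotics.isLittleO_const_id_atTop (2 : ℝ)).isBigO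
    · have h1 : (fun x : ℝ => Real.log x) =o[Filter.atTop] (fun x : ℝ => x ^ (1 / 2 : ℝ)) :=
        isLittleO_log_rpow_atTop (by norm_num)
      have h2 : (fun x : ℝ => 2 * √x) =O[Filter.atTop] (fun x : ℝ => x ^ (1 / 2 : ℝ)) := by
        simp_rw [← Real.sqrt_eq_rpow]
        exact Asymptotics.isBigO_const_mul_self 2 _ _
      refine (h2.mul_isLittleO h1).congr' Filter.EventuallyEq.rfl ?_
      filter_upwards [Filter.eventually_gt_atTop 0] with x hx
      rw [← Real.rpow_add hx]; norm_num
  have hev := hO.bound (half_pos hl2)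
  obtain ⟨X, hX⟩ := Filter.eventually_atTop.1 hev
  set Y := max X 2 with hY
  have hY2 : 2 ≤ Y := le_max_right _ _
  refine ⟨min (Real.log 2 / 2) (Real.log 2 / Y), by positivity, fun x hx => ?_⟩
  rcases le_total Y x with h | h
  · have h1 := hX x ((le_max_left _ _).trans h)
    have h2 := Chebyshev.theta_ge' (x := x) (by linarith)
    rw [Real.norm_of_nonneg (by linarith : (0 : ℝ) ≤ x)] at h1
    have h3 := (le_abs_self _).trans h1
    calc min (Real.log 2 / 2) (Real.log 2 / Y) * x ≤ Real.log 2 / 2 * x := by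
          gcongr; exact min_le_left _ _
      _ ≤ _ := by linarith
  · calc min (Real.log 2 / 2) (Real.log 2 / Y) * x ≤ Real.log 2 / Y * Y := by
          gcongr; exact min_le_right _ _
      _ = Chebyshev.theta 2 := by
          rw [div_mul_cancel₀ _ (by positivity), Chebyshev.theta]
          rw [show ⌊(2 : ℝ)⌋₊ = 2 by norm_num, show (Ioc 0 2).filter Nat.Prime = {2} by decide]
          simp
      _ ≤ _ := Chebyshev.theta_mono hx

/-- The contribution of the primes to `log n = ∑_{d ∣ n} Λ(d)` bounds `∑ w(n) log n` from below in terms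
of the logarithmic average of `w`, for which `harmonic_le_omegaLogSum_sq` gives a lower bound. -/
lemma le_omegaSum_half : ∃ c : ℝ, 0 < c ∧ ∀ N : ℕ, c * N ≤ omegaSum (1 / 2) N * √(ell N) := by
  obtain ⟨c, hc, hθ⟩ := exists_mul_le_theta
  have hw := omegaWeight_nonneg (z := 1 / 2) (by norm_num)
  refine ⟨min (c / 8) (1 / 4), by positivity, fun N => ?_⟩
  have hs : 1 ≤ √(ell N) := Real.one_le_sqrt.2 (one_le_ell N)
  have hss : √(ell N) * √(ell N) = ell N := Real.mul_self_sqrt (ell_pos N).le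
  rcases Nat.eq_zero_or_pos N with rfl | hN0
  · simp [omegaSum]
  have hNpos : (0 : ℝ) < N := by exact_mod_cast hN0
  have hS1 : 1 ≤ omegaSum (1 / 2) N := by
    have : omegaWeight (1 / 2) 1 ≤ omegaSum (1 / 2) N :=
      single_le_sum (f := omegaWeight (1 / 2)) (fun n _ => hw n) (by simp; omega)
    simpa [omegaWeight] using this
  rcases lt_or_ge N 4 with h4 | h4
  · have : (N : ℝ) ≤ 4 := by exact_mod_cast h4.le
    calc min (c / 8) (1 / 4) * N ≤ 1 / 4 * 4 := by gcongr; exact min_le_right _ _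
      _ = 1 * 1 := by norm_num
      _ ≤ _ := by gcongr
  have h1 : ∑ n ∈ Ioc 0 N, omegaWeight (1 / 2) n * Real.log n ≤ omegaSum (1 / 2) N * ell N := by
    rw [omegaSum, sum_mul]
    refine sum_le_sum fun n hn => ?_
    simp only [mem_Ioc] at hn
    gcongr
    · exact hw n
    · rw [ell]
      have : Real.log n ≤ Real.log N :=
        Real.log_le_log (by exact_mod_cast hn.1) (by exact_mod_cast hn.2)
      linarith
  have h2 : c / 2 * N * omegaLogSum (1 / 2) (N / 2) ≤
      ∑ n ∈ Ioc 0 N, omegaWeight (1 / 2) n * Real.log n := by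
    rw [sum_omegaWeight_mul_log, omegaLogSum, mul_sum]
    calc ∑ m ∈ Ioc 0 (N / 2), c / 2 * N * (omegaWeight (1 / 2) m / m)
        ≤ ∑ m ∈ Ioc 0 (N / 2), ∑ d ∈ Ioc 0 (N / m),
            omegaWeight (1 / 2) m * (omegaWeight (1 / 2) d * vonMangoldt d) := by
          refine sum_le_sum fun m hm => ?_
          simp only [mem_Ioc] at hm
          have hm0 : (0 : ℝ) < m := by exact_mod_cast hm.1
          have h2m : (2 : ℝ) ≤ N / m := by
            rw [le_div_iff₀ hm0]
            have := (Nat.le_div_iff_mul_le two_pos).1 hm.2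
            rw [mul_comm] at this
            exact_mod_cast this
          have hth := hθ _ h2m
          rw [Chebyshev.theta, Nat.floor_div_natCast, Nat.floor_natCast] at hth
          calc c / 2 * N * (omegaWeight (1 / 2) m / m)
              = omegaWeight (1 / 2) m * (1 / 2 * (c * (N / m))) := by ring
            _ ≤ omegaWeight (1 / 2) m * (1 / 2 *
                  ∑ p ∈ Ioc 0 (N / m) with p.Prime, Real.log p) := by gcongr; exact hw m
            _ = omegaWeight (1 / 2) m * ∑ p ∈ Ioc 0 (N / m) with p.Prime,
                  omegaWeight (1 / 2) p * vonMangoldt p := by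
                rw [mul_sum (a := ((1 : ℝ) / 2))]
                congr 1
                refine sum_congr rfl fun p hp => ?_
                have hp' := (mem_filter.1 hp).2
                rw [vonMangoldt_apply_prime hp', omegaWeight, cardFactors_apply_prime hp', pow_one]
            _ ≤ omegaWeight (1 / 2) m * ∑ p ∈ Ioc 0 (N / m),
                  omegaWeight (1 / 2) p * vonMangoldt p := by
                gcongr
                · exact hw m
                · exact fun p _ _ => mul_nonneg (hw p) vonMangoldt_nonneg
                · exact filter_subset _ _
            _ = _ := by rw [mul_sum]
      _ ≤ _ := by
          refine sum_le_sum_of_subset_of_nonneg (Ioc_subset_Ioc_right (Nat.div_le_self _ _)) ?_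
          exact fun m _ _ => sum_nonneg fun d _ =>
            mul_nonneg (hw m) (mul_nonneg (hw d) vonMangoldt_nonneg)
  have h3 : √(ell N) / 4 ≤ omegaLogSum (1 / 2) (N / 2) := by
    have hL0 : 0 ≤ omegaLogSum (1 / 2) (N / 2) :=
      sum_nonneg fun n _ => div_nonneg (hw n) (Nat.cast_nonneg n)
    refine abs_le_of_sq_le_sq' ?_ hL0 |>.2
    rw [div_pow, Real.sq_sqrt (ell_pos N).le]
    have ha := harmonic_le_omegaLogSum_sq (N / 2)
    have hb : Real.log ((N / 2 : ℕ) + 1 : ℕ) ≤ harmonic (N / 2) := by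
      exact_mod_cast log_add_one_le_harmonic (N / 2)
    have hd : Real.log N - Real.log 2 ≤ Real.log ((N / 2 : ℕ) + 1 : ℕ) := by
      rw [← Real.log_div hNpos.ne' two_ne_zero]
      refine Real.log_le_log (by positivity) ?_
      rw [div_le_iff₀ two_pos]
      have : N ≤ (N / 2 + 1) * 2 := by omega
      exact_mod_cast this
    have he : 2 * Real.log 2 ≤ Real.log N := by
      rw [show 2 * Real.log 2 = Real.log 4 by
        rw [show (4 : ℝ) = 2 ^ 2 by norm_num, Real.log_pow]; norm_num]
      exact Real.log_le_log (by norm_num) (by exact_mod_cast h4)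
    have hf := Real.log_two_gt_d9
    rw [ell]
    nlinarith
  have h5 : c / 8 * N * √(ell N) ≤ omegaSum (1 / 2) N * √(ell N) * √(ell N) := by
    rw [mul_assoc (omegaSum _ _), hss]
    refine le_trans ?_ (h2.trans h1)
    calc c / 8 * N * √(ell N) = c / 2 * N * (√(ell N) / 4) := by ring
      _ ≤ _ := by gcongr
  have h6 : c / 8 * N ≤ omegaSum (1 / 2) N * √(ell N) :=
    le_of_mul_le_mul_right h5 (by linarith)
  refine le_trans ?_ h6
  gcongr
  exact min_le_left _ _

/-! ### The weighted gcd sum -/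

lemma sum_omegaWeight_dvd (z : ℝ) {g : ℕ} (hg : 0 < g) (r : ℕ) :
    ∑ q ∈ Ioc 0 r with g ∣ q, omegaWeight z q = omegaWeight z g * omegaSum z (r / g) := by
  rw [omegaSum, mul_sum]
  symm
  refine sum_nbij' (fun b => g * b) (fun q => q / g) ?_ ?_ ?_ ?_ ?_
  · intro b hb
    simp only [mem_Ioc, mem_filter] at hb ⊢
    rw [Nat.le_div_iff_mul_le hg, mul_comm] at hb
    exact ⟨⟨Nat.mul_pos hg hb.1, hb.2⟩, dvd_mul_right _ _⟩
  · intro q hq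
    simp only [mem_Ioc, mem_filter] at hq ⊢
    exact ⟨Nat.div_pos (Nat.le_of_dvd hq.1.1 hq.2) hg, Nat.div_le_div_right hq.1.2⟩
  · intro b _
    exact Nat.mul_div_cancel_left _ hg
  · intro q hq
    exact Nat.mul_div_cancel' (mem_filter.1 hq).2
  · intro b hb
    simp only [mem_Ioc] at hb
    exact (omegaWeight_mul z hg.ne' hb.1.ne').symm

/-- The normalised weighted gcd sum `r⁻¹ ∑_{q ≤ r} 2 ^ (-Ω(q)) gcd(q, r)`, which measures the total
correlation of the `r`-th event with the earlier ones. -/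
noncomputable def gcdAvg (r : ℕ) : ℝ :=
  (∑ q ∈ Ioc 0 r, omegaWeight (1 / 2) q * (Nat.gcd q r : ℝ)) / r

lemma gcdAvg_nonneg (r : ℕ) : 0 ≤ gcdAvg r :=
  div_nonneg (sum_nonneg fun q _ => mul_nonneg (omegaWeight_nonneg (by norm_num) q)
    (Nat.cast_nonneg _)) (Nat.cast_nonneg _)

/-- The gcd is bounded by the sum of all common divisors `g` of `q` and `r`. The factor `2 ^ (-Ω(g))`
then occurs twice, once from `q` and once from `r`, which explains the weight `4 ^ (-Ω(g))`. -/
lemma omegaWeight_mul_gcdAvg_le {r : ℕ} (hr : 0 < r) :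
    omegaWeight (1 / 2) r * gcdAvg r ≤ ∑ g ∈ r.divisors, omegaWeight (1 / 4) g *
      (omegaWeight (1 / 2) (r / g) * omegaSum (1 / 2) (r / g) / (r / g : ℕ)) := by
  have hw := omegaWeight_nonneg (z := 1 / 2) (by norm_num)
  have hr0 : (0 : ℝ) < r := by exact_mod_cast hr
  have h1 : ∑ q ∈ Ioc 0 r, omegaWeight (1 / 2) q * (Nat.gcd q r : ℝ) ≤
      ∑ g ∈ r.divisors, (g : ℝ) * (omegaWeight (1 / 2) g * omegaSum (1 / 2) (r / g)) := by
    calc ∑ q ∈ Ioc 0 r, omegaWeight (1 / 2) q * (Nat.gcd q r : ℝ)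
        ≤ ∑ q ∈ Ioc 0 r, ∑ g ∈ r.divisors,
            (g : ℝ) * (if g ∣ q then omegaWeight (1 / 2) q else 0) := by
          refine sum_le_sum fun q _ => ?_
          have hmem : Nat.gcd q r ∈ r.divisors :=
            Nat.mem_divisors.2 ⟨Nat.gcd_dvd_right q r, hr.ne'⟩
          refine le_trans (le_of_eq ?_) (single_le_sum (f := fun g : ℕ =>
            (g : ℝ) * (if g ∣ q then omegaWeight (1 / 2) q else 0)) (fun g _ => ?_) hmem)
          · simp only [Nat.gcd_dvd_left, if_true]; ring
          · split_ifs
            · exact mul_nonneg (Nat.cast_nonneg _) (hw q)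
            · simp
      _ = ∑ g ∈ r.divisors, (g : ℝ) * ∑ q ∈ Ioc 0 r with g ∣ q, omegaWeight (1 / 2) q := by
          rw [sum_comm]
          refine sum_congr rfl fun g _ => ?_
          rw [← mul_sum, sum_filter]
      _ = _ := by
          refine sum_congr rfl fun g hg => ?_
          rw [sum_omegaWeight_dvd _ (Nat.pos_of_mem_divisors hg)]
  calc omegaWeight (1 / 2) r * gcdAvg r
      ≤ omegaWeight (1 / 2) r * ((∑ g ∈ r.divisors,
          (g : ℝ) * (omegaWeight (1 / 2) g * omegaSum (1 / 2) (r / g))) / r) := by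
        rw [gcdAvg]; gcongr; exact hw r
    _ = _ := by
        rw [sum_div, mul_sum]
        refine sum_congr rfl fun g hg => ?_
        obtain ⟨e, rfl⟩ := Nat.dvd_of_mem_divisors hg
        have hd0 : g ≠ 0 := by rintro rfl; simp at hr
        have he0 : e ≠ 0 := by rintro rfl; simp at hr
        rw [Nat.mul_div_cancel_left _ (Nat.pos_of_ne_zero hd0), omegaWeight_mul _ hd0 he0,
          show omegaWeight (1 / 4) g = omegaWeight (1 / 2) g * omegaWeight (1 / 2) g by
            rw [omegaWeight, omegaWeight, ← mul_pow]; norm_num]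
        push_cast
        field_simp

lemma ell_le_two_mul {b x : ℕ} (hx : 0 < x) (h : x < b * b) : ell x ≤ 2 * ell b := by
  have hb : b ≠ 0 := by rintro rfl; simp at h
  have h1 : Real.log x ≤ Real.log (b * b : ℝ) :=
    Real.log_le_log (by exact_mod_cast hx) (by exact_mod_cast h.le)
  rw [Real.log_mul (by positivity) (by positivity)] at h1
  unfold ell; linarith

lemma ell_le_three_mul {g N : ℕ} (hg : 0 < g) (h : g * g ≤ N) : ell N ≤ 3 * ell (N / g) := by
  set k := N / g with hk
  have hk0 : 0 < k := Nat.div_pos ((Nat.le_mul_self g).trans h) hg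
  have hN0 : 0 < N := lt_of_lt_of_le (Nat.mul_pos hg hg) h
  have h1 : N < g * (k + 1) := Nat.lt_mul_div_succ N hg
  have h2 : N ≤ g * (2 * k) := h1.le.trans (Nat.mul_le_mul_left _ (by omega))
  have h3 : N ≤ 4 * (k * k) := by
    have : N * N ≤ N * (4 * (k * k)) := by
      calc N * N ≤ (g * (2 * k)) * (g * (2 * k)) := Nat.mul_le_mul h2 h2
        _ = g * g * (4 * (k * k)) := by ring
        _ ≤ _ := Nat.mul_le_mul_right _ h
    exact Nat.le_of_mul_le_mul_left this hN0
  have hkr : (0 : ℝ) < k := by exact_mod_cast hk0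
  have h4 : Real.log N ≤ Real.log (4 * (k * k) : ℝ) :=
    Real.log_le_log (by exact_mod_cast hN0) (by exact_mod_cast h3)
  rw [Real.log_mul (by norm_num) (by positivity), Real.log_mul hkr.ne' hkr.ne',
    show (4 : ℝ) = 2 ^ 2 by norm_num, Real.log_pow] at h4
  have h5 := Real.log_two_lt_d9
  have h6 := Real.log_natCast_nonneg k
  push_cast at h4
  unfold ell
  linarith

/-- Inserting `(1 + log b)^(-1/2)` in a sum: the terms with `b ≤ √x` are estimated trivially, and
on the remaining ones this factor is of the order of `(1 + log x)^(-1/2)`. -/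
lemma sum_div_sqrt_ell_le {a : ℕ → ℝ} (ha : ∀ n, 0 ≤ a n) (ha1 : ∀ n, a n ≤ 1) (x : ℕ) :
    ∑ b ∈ Ioc 0 x, a b / √(ell b) ≤ √x + 2 * (∑ b ∈ Ioc 0 x, a b) / √(ell x) := by
  have hs : ∀ n, 0 < √(ell n) := fun n => Real.sqrt_pos.2 (ell_pos n)
  have hs1 : ∀ n, 1 ≤ √(ell n) := fun n => Real.one_le_sqrt.2 (one_le_ell n)
  rw [← sum_filter_add_sum_filter_not (Ioc 0 x) (fun b => b * b ≤ x) (fun b => a b / √(ell b))]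
  refine add_le_add ?_ ?_
  · calc ∑ b ∈ Ioc 0 x with b * b ≤ x, a b / √(ell b)
        ≤ ∑ b ∈ Ioc 0 x with b * b ≤ x, (1 : ℝ) := by
          refine sum_le_sum fun b _ => ?_
          rw [div_le_one (hs b)]
          exact (ha1 b).trans (hs1 b)
      _ ≤ ∑ b ∈ Ioc 0 (Nat.sqrt x), (1 : ℝ) := by
          refine sum_le_sum_of_subset_of_nonneg ?_ fun _ _ _ => zero_le_one
          intro b hb
          simp only [mem_filter, mem_Ioc] at hb ⊢
          exact ⟨hb.1.1, Nat.le_sqrt.2 hb.2⟩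
      _ = Nat.sqrt x := by simp
      _ ≤ √x := Real.nat_sqrt_le_real_sqrt
  · calc ∑ b ∈ Ioc 0 x with ¬ b * b ≤ x, a b / √(ell b)
        ≤ ∑ b ∈ Ioc 0 x with ¬ b * b ≤ x, 2 * a b / √(ell x) := by
          refine sum_le_sum fun b hb => ?_
          simp only [mem_filter, mem_Ioc, not_le] at hb
          have h1 := ell_le_two_mul (hb.1.1.trans_le hb.1.2) hb.2
          have h2 : √(ell x) ≤ 2 * √(ell b) := by
            rw [Real.sqrt_le_left (by positivity), mul_pow, Real.sq_sqrt (ell_pos b).le]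
            linarith [ell_pos b]
          rw [div_le_div_iff₀ (hs b) (hs x)]
          nlinarith [ha b]
      _ ≤ ∑ b ∈ Ioc 0 x, 2 * a b / √(ell x) :=
          sum_le_sum_of_subset_of_nonneg (filter_subset _ _) fun b _ _ =>
            div_nonneg (mul_nonneg zero_le_two (ha b)) (hs x).le
      _ = _ := by rw [← sum_div, ← mul_sum]

lemma sqrt_mul_ell_le (x : ℕ) : √x * ell x ≤ 2 * x := by
  rcases Nat.eq_zero_or_pos x with rfl | hx
  · simp
  have hx0 : (0 : ℝ) < x := by exact_mod_cast hx
  have hs : 0 < √(x : ℝ) := Real.sqrt_pos.2 hx0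
  have h1 : Real.log x = 2 * Real.log √(x : ℝ) := by
    rw [Real.log_sqrt hx0.le]; ring
  have h2 := Real.log_le_sub_one_of_pos hs
  have h3 : ell x ≤ 2 * √(x : ℝ) := by rw [ell, h1]; linarith
  calc √(x : ℝ) * ell x ≤ √(x : ℝ) * (2 * √(x : ℝ)) := by gcongr
    _ = 2 * (√(x : ℝ) * √(x : ℝ)) := by ring
    _ = 2 * x := by rw [Real.mul_self_sqrt hx0.le]

lemma sum_omegaWeight_div_sqrt_ell_le : ∃ C : ℝ, 0 < C ∧ ∀ x : ℕ,
    (∑ b ∈ Ioc 0 x, omegaWeight (1 / 2) b / √(ell b)) * ell x ≤ C * x := by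
  obtain ⟨C, hC, h⟩ := omegaSum_half_le
  refine ⟨2 + 2 * C, by positivity, fun x => ?_⟩
  have h1 := sum_div_sqrt_ell_le (omegaWeight_nonneg (z := 1 / 2) (by norm_num))
    (omegaWeight_le_one (by norm_num) (by norm_num)) x
  have h2 := h x
  calc (∑ b ∈ Ioc 0 x, omegaWeight (1 / 2) b / √(ell b)) * ell x
      ≤ (√x + 2 * omegaSum (1 / 2) x / √(ell x)) * ell x := by
        gcongr
        · exact (ell_pos x).le
        · exact h1
    _ = √x * ell x + 2 * (omegaSum (1 / 2) x * √(ell x)) := by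
        rw [add_mul]; congr 1
        rw [div_mul_eq_mul_div, mul_div_assoc, Real.div_sqrt]; ring
    _ ≤ 2 * x + 2 * (C * x) := by
        exact add_le_add (sqrt_mul_ell_le x) (by gcongr)
    _ = _ := by ring

/-- Here the sum is cut at `1 + log b = √(1 + log N)`. -/
lemma sum_omegaWeight_div_mul_sqrt_ell_le (N : ℕ) :
    ∑ b ∈ Ioc 0 N, omegaWeight (1 / 2) b / (b * √(ell b)) ≤ 4 * √√(ell N) := by
  have hw := omegaWeight_nonneg (z := 1 / 2) (by norm_num)
  set s := √√(ell N) with hsdef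
  have hs : 0 < s := Real.sqrt_pos.2 (Real.sqrt_pos.2 (ell_pos N))
  have hs2 : s * s = √(ell N) := Real.mul_self_sqrt (Real.sqrt_nonneg _)
  have hq : ∀ n, 0 < √(ell n) := fun n => Real.sqrt_pos.2 (ell_pos n)
  have hq1 : ∀ n, 1 ≤ √(ell n) := fun n => Real.one_le_sqrt.2 (one_le_ell n)
  have hnn : ∀ n : ℕ, 0 ≤ omegaWeight (1 / 2) n / n := fun n =>
    div_nonneg (hw n) (Nat.cast_nonneg n)
  have hterm : ∀ b : ℕ, omegaWeight (1 / 2) b / (b * √(ell b)) =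
      omegaWeight (1 / 2) b / b / √(ell b) := fun b => by rw [div_div]
  simp_rw [hterm]
  rw [← sum_filter_add_sum_filter_not (Ioc 0 N) (fun b => ell b ≤ s * s)
    (fun b => omegaWeight (1 / 2) b / b / √(ell b))]
  have h1 : ∑ b ∈ Ioc 0 N with ell b ≤ s * s, omegaWeight (1 / 2) b / b / √(ell b) ≤ 2 * s := by
    set B := ⌊Real.exp (s * s - 1)⌋₊ with hB
    have hB1 : 1 ≤ s * s := by rw [hs2]; exact hq1 N
    have hBpos : 0 < B := Nat.floor_pos.2 (Real.one_le_exp (by linarith))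
    have hellB : ell B ≤ s * s := by
      have : Real.log B ≤ s * s - 1 := by
        rw [Real.log_le_iff_le_exp (by exact_mod_cast hBpos)]
        exact Nat.floor_le (Real.exp_pos _).le
      unfold ell; linarith
    calc ∑ b ∈ Ioc 0 N with ell b ≤ s * s, omegaWeight (1 / 2) b / b / √(ell b)
        ≤ ∑ b ∈ Ioc 0 N with ell b ≤ s * s, omegaWeight (1 / 2) b / b :=
          sum_le_sum fun b _ => div_le_self (hnn b) (hq1 b)
      _ ≤ omegaLogSum (1 / 2) B := by
          refine sum_le_sum_of_subset_of_nonneg ?_ fun b _ _ => hnn b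
          intro b hb
          simp only [mem_filter, mem_Ioc] at hb ⊢
          refine ⟨hb.1.1, Nat.le_floor ?_⟩
          rw [← Real.log_le_iff_le_exp (by exact_mod_cast hb.1.1)]
          have := hb.2
          unfold ell at this; linarith
      _ ≤ 2 * √(ell B) := omegaLogSum_half_le B
      _ ≤ 2 * s := by
          gcongr
          rw [Real.sqrt_le_left hs.le, sq]
          exact hellB
  have h2 : ∑ b ∈ Ioc 0 N with ¬ ell b ≤ s * s, omegaWeight (1 / 2) b / b / √(ell b) ≤ 2 * s := by
    calc ∑ b ∈ Ioc 0 N with ¬ ell b ≤ s * s, omegaWeight (1 / 2) b / b / √(ell b)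
        ≤ ∑ b ∈ Ioc 0 N with ¬ ell b ≤ s * s, omegaWeight (1 / 2) b / b / s := by
          refine sum_le_sum fun b hb => ?_
          have hb2 := (mem_filter.1 hb).2
          refine div_le_div_of_nonneg_left (hnn b) hs ?_
          rw [Real.le_sqrt hs.le (ell_pos b).le, sq]
          exact (not_le.1 hb2).le
      _ ≤ ∑ b ∈ Ioc 0 N, omegaWeight (1 / 2) b / b / s :=
          sum_le_sum_of_subset_of_nonneg (filter_subset _ _) fun b _ _ => div_nonneg (hnn b) hs.le
      _ = omegaLogSum (1 / 2) N / s := by rw [← sum_div, omegaLogSum]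
      _ ≤ 2 * √(ell N) / s := by gcongr; exact omegaLogSum_half_le N
      _ = 2 * s := by rw [← hs2]; field_simp
  linarith

/-- On average against the weights `2 ^ (-Ω(r))`, the gcd sum is bounded. With `r = g b` the sum is
estimated by Dirichlet's hyperbola method: the inner variable runs over `b` if `g ≤ √N` and over `g`
if `b ≤ √N`. -/
lemma sum_omegaWeight_mul_gcdAvg_le : ∃ C : ℝ, 0 < C ∧ ∀ N : ℕ,
    ∑ r ∈ Ioc 0 N, omegaWeight (1 / 2) r * gcdAvg r ≤ C * omegaSum (1 / 2) N := by
  obtain ⟨C₁, hC₁, hS⟩ := omegaSum_half_le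
  obtain ⟨C₂, hC₂, hS4⟩ := omegaSum_quarter_le
  obtain ⟨C₃, hC₃, hH⟩ := sum_omegaWeight_div_sqrt_ell_le
  obtain ⟨c, hc, hlow⟩ := le_omegaSum_half
  have hw := omegaWeight_nonneg (z := 1 / 2) (by norm_num)
  have hw4 := omegaWeight_nonneg (z := 1 / 4) (by norm_num)
  have hq : ∀ n, 0 < √(ell n) := fun n => Real.sqrt_pos.2 (ell_pos n)
  have hv : ∀ b, 0 ≤ omegaWeight (1 / 2) b / √(ell b) := fun b => div_nonneg (hw b) (hq b).le
  refine ⟨C₁ * (6 * C₃ + 32 * C₂) / c, by positivity, fun N => ?_⟩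
  set s := √√(ell N) with hsdef
  have hs : 0 < s := Real.sqrt_pos.2 (hq N)
  have hs2 : s * s = √(ell N) := Real.mul_self_sqrt (Real.sqrt_nonneg _)
  -- the sum over pairs `(g, b)` with `g * b ≤ N`, where `r = g * b`
  have h1 : ∑ r ∈ Ioc 0 N, omegaWeight (1 / 2) r * gcdAvg r ≤
      C₁ * ∑ g ∈ Ioc 0 N, ∑ b ∈ Ioc 0 (N / g),
        omegaWeight (1 / 4) g * (omegaWeight (1 / 2) b / √(ell b)) := by
    calc ∑ r ∈ Ioc 0 N, omegaWeight (1 / 2) r * gcdAvg r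
        ≤ ∑ r ∈ Ioc 0 N, ∑ g ∈ r.divisors, omegaWeight (1 / 4) g *
            (omegaWeight (1 / 2) (r / g) * omegaSum (1 / 2) (r / g) / (r / g : ℕ)) :=
          sum_le_sum fun r hr => omegaWeight_mul_gcdAvg_le (mem_Ioc.1 hr).1
      _ = ∑ g ∈ Ioc 0 N, ∑ b ∈ Ioc 0 (N / g), omegaWeight (1 / 4) g *
            (omegaWeight (1 / 2) b * omegaSum (1 / 2) b / b) :=
          sum_divisors_eq_sum_sum (fun g b => omegaWeight (1 / 4) g *
            (omegaWeight (1 / 2) b * omegaSum (1 / 2) b / b)) N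
      _ ≤ _ := by
          rw [mul_sum]
          refine sum_le_sum fun g _ => ?_
          rw [mul_sum]
          refine sum_le_sum fun b hb => ?_
          have hb0 : (0 : ℝ) < b := by exact_mod_cast (mem_Ioc.1 hb).1
          have h2 := hS b
          calc omegaWeight (1 / 4) g * (omegaWeight (1 / 2) b * omegaSum (1 / 2) b / b)
              ≤ omegaWeight (1 / 4) g * (omegaWeight (1 / 2) b * (C₁ * b / √(ell b)) / b) := by
                gcongr
                · exact hw4 g
                · exact hw b
                · rwa [le_div_iff₀ (hq b)]
            _ = _ := by field_simp
  have h2 : ∑ g ∈ Ioc 0 N, ∑ b ∈ Ioc 0 (N / g),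
        omegaWeight (1 / 4) g * (omegaWeight (1 / 2) b / √(ell b)) ≤
      (∑ g ∈ Ioc 0 N with g * g ≤ N, ∑ b ∈ Ioc 0 (N / g),
        omegaWeight (1 / 4) g * (omegaWeight (1 / 2) b / √(ell b))) +
      ∑ b ∈ Ioc 0 N with b * b ≤ N, ∑ g ∈ Ioc 0 (N / b),
        omegaWeight (1 / 4) g * (omegaWeight (1 / 2) b / √(ell b)) := by
    rw [← sum_filter_add_sum_filter_not (Ioc 0 N) (fun g => g * g ≤ N)]
    gcongr
    rw [sum_sigma', sum_sigma']
    have hinj : Set.InjOn (fun x : (_ : ℕ) × ℕ => (⟨x.2, x.1⟩ : (_ : ℕ) × ℕ))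
        ((((Ioc 0 N).filter fun g => ¬ g * g ≤ N).sigma fun g => Ioc 0 (N / g) :
          Finset ((_ : ℕ) × ℕ)) : Set ((_ : ℕ) × ℕ)) := by
      rintro ⟨a, b⟩ _ ⟨a', b'⟩ _ h
      simp at h ⊢
      exact ⟨h.2, h.1⟩
    rw [← sum_image (f := fun x : (_ : ℕ) × ℕ =>
      omegaWeight (1 / 4) x.2 * (omegaWeight (1 / 2) x.1 / √(ell x.1))) hinj]
    refine sum_le_sum_of_subset_of_nonneg ?_ fun x _ _ => mul_nonneg (hw4 _) (hv _)
    intro x hx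
    obtain ⟨⟨g, b⟩, hgb, rfl⟩ := mem_image.1 hx
    simp only [mem_sigma, mem_filter, mem_Ioc, not_le] at hgb ⊢
    obtain ⟨⟨⟨hg0, hgN⟩, hgg⟩, hb0, hbN⟩ := hgb
    rw [Nat.le_div_iff_mul_le hg0] at hbN
    refine ⟨⟨⟨hb0, (Nat.le_mul_of_pos_right b hg0).trans hbN⟩, ?_⟩, hg0, ?_⟩
    · have : b < g := by
        by_contra hcon
        have := Nat.mul_le_mul_right g (not_lt.1 hcon)
        omega
      exact (Nat.mul_le_mul_left b this.le).trans hbN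
    · rw [Nat.le_div_iff_mul_le hb0]; linarith [mul_comm g b]
  have h3 : ∑ g ∈ Ioc 0 N with g * g ≤ N, ∑ b ∈ Ioc 0 (N / g),
        omegaWeight (1 / 4) g * (omegaWeight (1 / 2) b / √(ell b)) ≤
      6 * C₃ * N / √(ell N) := by
    calc _ ≤ ∑ g ∈ Ioc 0 N with g * g ≤ N, 3 * C₃ * N / ell N * (omegaWeight (1 / 2) g / g) := by
          refine sum_le_sum fun g hg => ?_
          simp only [mem_filter, mem_Ioc] at hg
          have hg0 : (0 : ℝ) < g := by exact_mod_cast hg.1.1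
          rw [← mul_sum]
          have ha := hH (N / g)
          have hb := ell_le_three_mul hg.1.1 hg.2
          have hd : ((N / g : ℕ) : ℝ) ≤ N / g := Nat.cast_div_le
          have he : ∑ b ∈ Ioc 0 (N / g), omegaWeight (1 / 2) b / √(ell b) ≤
              3 * C₃ * N / ell N / g := by
            have hT : 0 ≤ ∑ b ∈ Ioc 0 (N / g), omegaWeight (1 / 2) b / √(ell b) :=
              sum_nonneg fun b _ => hv b
            rw [div_right_comm, le_div_iff₀ (ell_pos N)]
            calc _ ≤ (∑ b ∈ Ioc 0 (N / g), omegaWeight (1 / 2) b / √(ell b)) *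
                    (3 * ell (N / g)) := by gcongr
              _ = 3 * ((∑ b ∈ Ioc 0 (N / g), omegaWeight (1 / 2) b / √(ell b)) *
                    ell (N / g)) := by ring
              _ ≤ 3 * (C₃ * (N / g)) :=
                  mul_le_mul_of_nonneg_left (ha.trans (by gcongr)) (by norm_num)
              _ = _ := by ring
          calc _ ≤ omegaWeight (1 / 2) g * (3 * C₃ * N / ell N / g) := by
                refine mul_le_mul ?_ he (sum_nonneg fun b _ => hv b) (hw g)
                exact pow_le_pow_left₀ (by norm_num) (by norm_num) _
            _ = _ := by ring
      _ ≤ ∑ g ∈ Ioc 0 N, 3 * C₃ * N / ell N * (omegaWeight (1 / 2) g / g) := by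
          refine sum_le_sum_of_subset_of_nonneg (filter_subset _ _) fun g _ _ => ?_
          have := ell_pos N
          have := hw g
          positivity
      _ = 3 * C₃ * N / ell N * omegaLogSum (1 / 2) N := by rw [← mul_sum, omegaLogSum]
      _ ≤ 3 * C₃ * N / ell N * (2 * √(ell N)) := by
          have := ell_pos N
          gcongr
          exact omegaLogSum_half_le N
      _ = _ := by
          rw [show 3 * C₃ * N / ell N * (2 * √(ell N)) = 6 * C₃ * N * (√(ell N) / ell N) by ring,
            Real.sqrt_div_self']
          ring
  have h4 : ∑ b ∈ Ioc 0 N with b * b ≤ N, ∑ g ∈ Ioc 0 (N / b),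
        omegaWeight (1 / 4) g * (omegaWeight (1 / 2) b / √(ell b)) ≤
      32 * C₂ * N / √(ell N) := by
    calc _ ≤ ∑ b ∈ Ioc 0 N with b * b ≤ N,
          8 * C₂ * N / s ^ 3 * (omegaWeight (1 / 2) b / (b * √(ell b))) := by
          refine sum_le_sum fun b hb => ?_
          simp only [mem_filter, mem_Ioc] at hb
          have hb0 : (0 : ℝ) < b := by exact_mod_cast hb.1.1
          rw [← sum_mul]
          have ha := hS4 (N / b)
          have hb' := ell_le_three_mul hb.1.1 hb.2
          have hd : ((N / b : ℕ) : ℝ) ≤ N / b := Nat.cast_div_le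
          set t := √√(ell (N / b)) with ht
          have hst : s ≤ 2 * t := by
            rw [hsdef, Real.sqrt_le_left (by positivity), mul_pow,
              Real.sq_sqrt (Real.sqrt_nonneg _), Real.sqrt_le_left (by positivity), mul_pow,
              Real.sq_sqrt (ell_pos _).le]
            linarith [ell_pos (N / b)]
          have hT : 0 ≤ omegaSum (1 / 4) (N / b) := sum_nonneg fun b _ => hw4 b
          have he : omegaSum (1 / 4) (N / b) ≤ 8 * C₂ * N / s ^ 3 / b := by
            rw [div_right_comm, le_div_iff₀ (by positivity)]
            calc _ ≤ omegaSum (1 / 4) (N / b) * (2 * t) ^ 3 := by gcongr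
              _ = 8 * (omegaSum (1 / 4) (N / b) * t ^ 3) := by ring
              _ ≤ 8 * (C₂ * (N / b)) :=
                  mul_le_mul_of_nonneg_left (ha.trans (by gcongr)) (by norm_num)
              _ = _ := by ring
          calc _ ≤ 8 * C₂ * N / s ^ 3 / b * (omegaWeight (1 / 2) b / √(ell b)) := by
                gcongr
                · exact hv b
                · exact he
            _ = _ := by have := hq b; field_simp
      _ ≤ ∑ b ∈ Ioc 0 N, 8 * C₂ * N / s ^ 3 * (omegaWeight (1 / 2) b / (b * √(ell b))) := by
          refine sum_le_sum_of_subset_of_nonneg (filter_subset _ _) fun b _ _ => ?_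
          have := hq b
          have := hw b
          positivity
      _ ≤ 8 * C₂ * N / s ^ 3 * (4 * s) := by
          rw [← mul_sum]
          gcongr
          exact sum_omegaWeight_div_mul_sqrt_ell_le N
      _ = _ := by rw [← hs2]; field_simp; ring
  have h5 : N / √(ell N) ≤ omegaSum (1 / 2) N / c := by
    rw [div_le_div_iff₀ (hq N) hc]
    linarith [hlow N]
  calc _ ≤ C₁ * (6 * C₃ * N / √(ell N) + 32 * C₂ * N / √(ell N)) := by
        refine h1.trans ?_
        gcongr
        exact h2.trans (add_le_add h3 h4)
    _ = C₁ * (6 * C₃ + 32 * C₂) * (N / √(ell N)) := by ring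
    _ ≤ C₁ * (6 * C₃ + 32 * C₂) * (omegaSum (1 / 2) N / c) := by gcongr
    _ = _ := by ring

/-! ### The events `‖qβ - c‖ < δ` and their correlations -/

lemma distNearestInt_add_intCast (t : ℝ) (n : ℤ) :
    distNearestInt (t + n) = distNearestInt t := by
  simp [distNearestInt, round_add_intCast]

lemma measurable_distNearestInt : Measurable distNearestInt := by
  have : distNearestInt = fun t : ℝ => min (Int.fract t) (1 - Int.fract t) := by
    ext t; exact abs_sub_round_eq_min t
  rw [this]
  exact measurable_fract.min (measurable_const.sub measurable_fract)

/-- The indicator function of `{t : ‖t‖ < δ}`. -/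
noncomputable def nearInd (δ : ℝ) : ℝ → ℝ := Set.indicator {t | distNearestInt t < δ} 1

lemma nearInd_nonneg (δ t : ℝ) : 0 ≤ nearInd δ t := Set.indicator_nonneg (fun _ _ => zero_le_one) t

lemma nearInd_le_one (δ t : ℝ) : nearInd δ t ≤ 1 := Set.indicator_le_self' (by simp) t |>.trans le_rfl

lemma nearInd_add_intCast (δ t : ℝ) (n : ℤ) : nearInd δ (t + n) = nearInd δ t := by
  simp only [nearInd, Set.indicator, Set.mem_ofPred_eq, distNearestInt_add_intCast, Pi.one_apply]

lemma nearInd_periodic (δ : ℝ) : Function.Periodic (nearInd δ) 1 := fun t => by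
  simpa using nearInd_add_intCast δ t 1

lemma measurable_nearInd (δ : ℝ) : Measurable (nearInd δ) :=
  measurable_one.indicator (measurableSet_lt measurable_distNearestInt measurable_const)

lemma intervalIntegrable_of_bounded {g : ℝ → ℝ} (hg : Measurable g) {C : ℝ}
    (hC : ∀ x, |g x| ≤ C) (a b : ℝ) : IntervalIntegrable g volume a b := by
  refine (intervalIntegrable_const (c := C)).mono_fun hg.aestronglyMeasurable ?_
  filter_upwards with x
  exact (hC x).trans (le_abs_self C)

lemma integral_nearInd {δ : ℝ} (h0 : 0 ≤ δ) (h1 : δ ≤ 1 / 2) :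
    ∫ t in (0 : ℝ)..1, nearInd δ t = 2 * δ := by
  have h := (nearInd_periodic δ).intervalIntegral_add_eq 0 (-(1 / 2))
  rw [zero_add] at h
  rw [h, intervalIntegral.integral_of_le (by norm_num), nearInd,
    setIntegral_indicator (measurableSet_lt measurable_distNearestInt measurable_const)]
  have hset : Set.Ioc (-(1 / 2) : ℝ) (-(1 / 2) + 1) ∩ {t | distNearestInt t < δ} =
      Set.Ioo (-δ) δ := by
    ext t
    simp only [Set.mem_inter_iff, Set.mem_Ioc, Set.mem_ofPred_eq, Set.mem_Ioo, ← abs_lt]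
    have key : -(1 / 2) < t → t ≤ 1 / 2 → distNearestInt t = |t| := by
      intro ha hb
      rw [distNearestInt, abs_sub_round_eq_min]
      rcases lt_or_ge t 0 with hneg | hpos
      · rw [show Int.fract t = t + 1 by
          rw [Int.fract_eq_iff]
          exact ⟨by linarith, by linarith, -1, by push_cast; ring⟩, abs_of_neg hneg,
          min_eq_right (by linarith)]
        ring
      · rw [Int.fract_eq_self.2 ⟨hpos, by linarith⟩, abs_of_nonneg hpos,
          min_eq_left (by linarith)]
    constructor
    · rintro ⟨⟨ha, hb⟩, hd⟩
      rwa [key ha (by linarith)] at hd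
    · intro ht
      have ht' := abs_lt.1 ht
      refine ⟨⟨by linarith, by linarith⟩, ?_⟩
      rwa [key (by linarith) (by linarith)]
  rw [hset]
  simp only [Pi.one_apply, integral_const, smul_eq_mul, mul_one, Measure.real,
    Measure.restrict_apply_univ, Real.volume_Ioo]
  rw [ENNReal.toReal_ofReal (by linarith)]
  ring

lemma integral_nearInd_mul_sub {δ : ℝ} (h0 : 0 ≤ δ) (h1 : δ ≤ 1 / 2) {q : ℕ} (hq : 0 < q) (c : ℝ) :
    ∫ β in (0 : ℝ)..1, nearInd δ (q * β - c) = 2 * δ := by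
  have hq0 : (q : ℝ) ≠ 0 := by positivity
  rw [intervalIntegral.integral_comp_mul_sub (nearInd δ) hq0 c]
  have h := (nearInd_periodic δ).intervalIntegral_add_zsmul_eq q (-c)
    (fun a b => intervalIntegrable_of_bounded (measurable_nearInd δ) (C := 1) (fun x => by
      rw [abs_of_nonneg (nearInd_nonneg δ x)]; exact nearInd_le_one δ x) a b)
  have h' := (nearInd_periodic δ).intervalIntegral_add_eq (-c) 0
  rw [zero_add] at h'
  rw [h', integral_nearInd h0 h1] at h
  have e1 : (q : ℝ) * 0 - c = -c := by ring
  have e2 : (q : ℝ) * 1 - c = -c + (q : ℤ) • (1 : ℝ) := by simp; ring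
  rw [e1, e2, h]
  simp
  field_simp

/-- Among the `n` equidistant points `x + j / n` of the circle, an arc of length `2δ` contains at
most `2δn + 1`. -/
lemma sum_nearInd_le {δ : ℝ} (h0 : 0 ≤ δ) {n : ℕ} (hn : 0 < n) (x : ℝ) :
    ∑ j ∈ range n, nearInd δ (x + j / n) ≤ 2 * δ * n + 1 := by
  have hn0 : (0 : ℝ) < n := by exact_mod_cast hn
  have hsum : ∑ j ∈ range n, nearInd δ (x + j / n) =
      (((range n).filter fun j : ℕ => distNearestInt (x + j / n) < δ).card : ℝ) := by
    rw [card_filter]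
    push_cast
    refine sum_congr rfl fun j _ => ?_
    simp [nearInd, Set.indicator]
  rw [hsum]
  set a : ℝ := n * (-δ - x)
  set b : ℝ := n * (δ - x)
  have hcard : ((range n).filter fun j : ℕ => distNearestInt (x + j / n) < δ).card ≤
      (Finset.Ioo ⌊a⌋ ⌈b⌉).card := by
    refine card_le_card_of_injOn (fun j : ℕ => (j : ℤ) - n * round (x + j / n)) ?_ ?_
    · intro j hj
      simp only [coe_filter, mem_range, Set.mem_ofPred_eq] at hj
      have h1 := abs_lt.1 hj.2
      have e : x + (j : ℝ) / n - round (x + (j : ℝ) / n) =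
          x + (((j : ℤ) - n * round (x + (j : ℝ) / n) : ℤ) : ℝ) / n := by
        push_cast; field_simp; ring
      rw [e] at h1
      simp only [coe_Ioo, Set.mem_Ioo]
      have e2 : ∀ m : ℝ, m = n * (m / n) := fun m => by field_simp
      constructor
      · rw [Int.floor_lt, e2 (((j : ℤ) - n * round (x + (j : ℝ) / n) : ℤ) : ℝ)]
        exact mul_lt_mul_of_pos_left (by linarith) hn0
      · rw [Int.lt_ceil, e2 (((j : ℤ) - n * round (x + (j : ℝ) / n) : ℤ) : ℝ)]
        exact mul_lt_mul_of_pos_left (by linarith) hn0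
    · intro i hi j hj hij
      simp only [coe_filter, mem_range, Set.mem_ofPred_eq] at hi hj
      have h1 : (i : ℤ) % n = (j : ℤ) % n := by
        have := congrArg (fun m : ℤ => m % n) hij
        simpa [Int.sub_mul_emod_self_left] using this
      rw [Int.emod_eq_of_lt (by positivity) (by exact_mod_cast hi.1),
        Int.emod_eq_of_lt (by positivity) (by exact_mod_cast hj.1)] at h1
      exact_mod_cast h1
  have hcard' : (((range n).filter fun j : ℕ => distNearestInt (x + j / n) < δ).card : ℝ) ≤
      ((Finset.Ioo ⌊a⌋ ⌈b⌉).card : ℝ) := by exact_mod_cast hcard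
  refine hcard'.trans ?_
  rw [Int.card_Ioo]
  have hab : b - a = 2 * δ * n := by ring
  rcases le_total (⌈b⌉ - ⌊a⌋ - 1) 0 with hneg | hpos
  · rw [Int.toNat_of_nonpos hneg]; simp; positivity
  · have : (((⌈b⌉ - ⌊a⌋ - 1).toNat : ℤ) : ℝ) = ⌈b⌉ - ⌊a⌋ - 1 := by
      rw [Int.toNat_of_nonneg hpos]; push_cast; ring
    rw [Int.cast_natCast] at this
    rw [this]
    linarith [Int.ceil_lt_add_one b, Int.sub_one_lt_floor a]

/-- Two events are independent up to an error governed by the gcd of their frequencies. The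
integrand is averaged over translations of `β` which fix `r β` modulo `1` and move `q β` through the
multiples of `gcd(q, r) / r`. -/
lemma integral_nearInd_mul_le {δ δ' : ℝ} (h0 : 0 ≤ δ) (h0' : 0 ≤ δ') (h1' : δ' ≤ 1 / 2)
    {q r : ℕ} (hr : 0 < r) (c c' : ℝ) :
    ∫ β in (0 : ℝ)..1, nearInd δ (q * β - c) * nearInd δ' (r * β - c') ≤
      4 * δ * δ' + 2 * δ' * (Nat.gcd q r / r) := by
  set g := Nat.gcd q r with hg
  have hg0 : 0 < g := Nat.gcd_pos_of_pos_right q hr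
  obtain ⟨n, hn⟩ : g ∣ r := Nat.gcd_dvd_right q r
  have hn0 : 0 < n := by
    rcases Nat.eq_zero_or_pos n with h | h
    · rw [h] at hn; omega
    · exact h
  have hnR : (0 : ℝ) < n := by exact_mod_cast hn0
  have hgR : (0 : ℝ) < g := by exact_mod_cast hg0
  have hrR : (r : ℝ) = g * n := by rw [hn]; push_cast; ring
  set u : ℤ := Nat.gcdA q r
  set v : ℤ := Nat.gcdB q r
  have hbez : (g : ℝ) = q * u + r * v := by exact_mod_cast Nat.gcd_eq_gcd_ab q r
  set G : ℝ → ℝ := fun β => nearInd δ (q * β - c) * nearInd δ' (r * β - c') with hG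
  have hGper : Function.Periodic G 1 := by
    intro β
    have e1 : (q : ℝ) * (β + 1) - c = (q * β - c) + ((q : ℤ) : ℝ) := by push_cast; ring
    have e2 : (r : ℝ) * (β + 1) - c' = (r * β - c') + ((r : ℤ) : ℝ) := by push_cast; ring
    simp only [hG]
    rw [e1, e2, nearInd_add_intCast, nearInd_add_intCast]
  have hshift : ∀ j : ℕ, ∫ β in (0 : ℝ)..1, G β =
      ∫ β in (0 : ℝ)..1, nearInd δ (q * β - c + j / n) * nearInd δ' (r * β - c') := by
    intro j
    have e : ∫ β in (0 : ℝ)..1, G β = ∫ β in (0 : ℝ)..1, G (β + u * j / r) := by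
      rw [intervalIntegral.integral_comp_add_right G, zero_add, add_comm (1 : ℝ)]
      have := hGper.intervalIntegral_add_eq 0 (u * j / r)
      rwa [zero_add] at this
    rw [e]
    refine intervalIntegral.integral_congr fun β _ => ?_
    simp only [hG]
    have e1 : (q : ℝ) * (β + u * j / r) - c = (q * β - c + j / n) + ((-(v * j) : ℤ) : ℝ) := by
      have : (q : ℝ) * u = g - r * v := by rw [hbez]; ring
      have h2 : (q : ℝ) * (u * j / r) = j / n - v * j := by
        rw [show (q : ℝ) * (u * j / r) = (q * u) * j / r by ring, this, hrR]
        field_simp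
      push_cast
      rw [mul_add, h2]; ring
    have e2 : (r : ℝ) * (β + u * j / r) - c' = (r * β - c') + ((u * j : ℤ) : ℝ) := by
      have : (r : ℝ) ≠ 0 := by positivity
      push_cast
      field_simp
      ring
    rw [e1, e2, nearInd_add_intCast, nearInd_add_intCast]
  have hm : ∀ (δ c d : ℝ) (q : ℕ), Measurable fun β : ℝ => nearInd δ (q * β - c + d) :=
    fun δ c d q => (measurable_nearInd δ).comp (by fun_prop)
  have hm' : ∀ (δ c : ℝ) (q : ℕ), Measurable fun β : ℝ => nearInd δ (q * β - c) :=
    fun δ c q => (measurable_nearInd δ).comp (by fun_prop)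
  have hgint : ∀ j : ℕ, IntervalIntegrable
      (fun β => nearInd δ (q * β - c + j / n) * nearInd δ' (r * β - c')) volume 0 1 := by
    intro j
    refine intervalIntegrable_of_bounded ((hm _ _ _ _).mul (hm' _ _ _)) (C := 1) (fun x => ?_) 0 1
    change |nearInd δ _ * nearInd δ' _| ≤ 1
    rw [abs_of_nonneg (mul_nonneg (nearInd_nonneg _ _) (nearInd_nonneg _ _))]
    exact mul_le_one₀ (nearInd_le_one _ _) (nearInd_nonneg _ _) (nearInd_le_one _ _)
  have hgint' : IntervalIntegrable (fun β => nearInd δ' (r * β - c')) volume 0 1 :=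
    intervalIntegrable_of_bounded (hm' _ _ _) (C := 1) (fun x => by
      rw [abs_of_nonneg (nearInd_nonneg _ _)]; exact nearInd_le_one _ _) 0 1
  have hsum : n * ∫ β in (0 : ℝ)..1, G β ≤ (2 * δ * n + 1) * (2 * δ') := by
    calc n * ∫ β in (0 : ℝ)..1, G β = ∑ j ∈ range n, ∫ β in (0 : ℝ)..1, G β := by simp
      _ = ∑ j ∈ range n, ∫ β in (0 : ℝ)..1,
            nearInd δ (q * β - c + j / n) * nearInd δ' (r * β - c') :=
          sum_congr rfl fun j _ => hshift j
      _ = ∫ β in (0 : ℝ)..1, ∑ j ∈ range n,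
            nearInd δ (q * β - c + j / n) * nearInd δ' (r * β - c') :=
          (intervalIntegral.integral_finsetSum fun j _ => hgint j).symm
      _ ≤ ∫ β in (0 : ℝ)..1, (2 * δ * n + 1) * nearInd δ' (r * β - c') := by
          refine intervalIntegral.integral_mono_on zero_le_one
            (by simpa only [Finset.sum_fn] using IntervalIntegrable.sum (range n) fun j _ => hgint j)
            (hgint'.const_mul _) fun β _ => ?_
          rw [← sum_mul]
          exact mul_le_mul_of_nonneg_right (sum_nearInd_le h0 hn0 _) (nearInd_nonneg _ _)
      _ = (2 * δ * n + 1) * (2 * δ') := by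
          rw [intervalIntegral.integral_const_mul, integral_nearInd_mul_sub h0' h1' hr]
  have hgr : (g : ℝ) / r = 1 / n := by rw [hrR]; field_simp
  rw [hgr]
  calc ∫ β in (0 : ℝ)..1, G β = (n * ∫ β in (0 : ℝ)..1, G β) / n := by field_simp
    _ ≤ (2 * δ * n + 1) * (2 * δ') / n := by gcongr
    _ = _ := by field_simp; ring

/-! ### The variance of the weighted count -/

lemma integral_centred_nearInd_mul_le {δ δ' : ℝ} (h0 : 0 ≤ δ) (h1 : δ ≤ 1 / 2) (h0' : 0 ≤ δ')
    (h1' : δ' ≤ 1 / 2) {q r : ℕ} (hq : 0 < q) (hr : 0 < r) (c c' : ℝ) :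
    ∫ β in (0 : ℝ)..1, (nearInd δ (q * β - c) - 2 * δ) * (nearInd δ' (r * β - c') - 2 * δ') ≤
      2 * δ' * (Nat.gcd q r / r) := by
  have hm : ∀ (δ c : ℝ) (q : ℕ), Measurable fun β : ℝ => nearInd δ (q * β - c) :=
    fun δ c q => (measurable_nearInd δ).comp (by fun_prop)
  have hgint : ∀ (δ c : ℝ) (q : ℕ),
      IntervalIntegrable (fun β => nearInd δ (q * β - c)) volume 0 1 := fun δ c q =>
    intervalIntegrable_of_bounded (hm _ _ _) (C := 1) (fun x => by
      rw [abs_of_nonneg (nearInd_nonneg _ _)]; exact nearInd_le_one _ _) 0 1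
  have hgint2 : IntervalIntegrable
      (fun β => nearInd δ (q * β - c) * nearInd δ' (r * β - c')) volume 0 1 := by
    refine intervalIntegrable_of_bounded ((hm _ _ _).mul (hm _ _ _)) (C := 1) (fun x => ?_) 0 1
    change |nearInd δ _ * nearInd δ' _| ≤ 1
    rw [abs_of_nonneg (mul_nonneg (nearInd_nonneg _ _) (nearInd_nonneg _ _))]
    exact mul_le_one₀ (nearInd_le_one _ _) (nearInd_nonneg _ _) (nearInd_le_one _ _)
  have e : ∀ β : ℝ, (nearInd δ (q * β - c) - 2 * δ) * (nearInd δ' (r * β - c') - 2 * δ') =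
      nearInd δ (q * β - c) * nearInd δ' (r * β - c') - (2 * δ') * nearInd δ (q * β - c) -
        (2 * δ) * nearInd δ' (r * β - c') + 4 * δ * δ' := fun β => by ring
  simp only [e]
  rw [intervalIntegral.integral_add
      ((hgint2.sub ((hgint δ c q).const_mul _)).sub ((hgint δ' c' r).const_mul _))
      intervalIntegrable_const,
    intervalIntegral.integral_sub (hgint2.sub ((hgint δ c q).const_mul _))
      ((hgint δ' c' r).const_mul _),
    intervalIntegral.integral_sub hgint2 ((hgint δ c q).const_mul _),
    intervalIntegral.integral_const_mul, intervalIntegral.integral_const_mul,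
    integral_nearInd_mul_sub h0 h1 hq, integral_nearInd_mul_sub h0' h1' hr,
    intervalIntegral.integral_const]
  have := integral_nearInd_mul_le h0 h0' h1' (q := q) hr c c'
  simp only [sub_zero, one_smul]
  linarith

/-- Only the pairs `q ≤ r` matter by symmetry, and for these the covariances sum up to
`gcdAvg r`. -/
lemma integral_sq_sum_le (γ : ℕ → ℝ) {ψ : ℕ → ℝ} (hψ : ∀ q, 0 < ψ q) {n : ℕ} (Q : ℕ)
    (hhalf : ∀ q, n < q → ψ q ≤ 1 / 2) :
    ∫ β in (0 : ℝ)..1, (∑ q ∈ Ioc n Q, omegaWeight (1 / 2) q *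
        (nearInd (ψ q) (q * β - γ q) - 2 * ψ q)) ^ 2 ≤
      4 * ∑ r ∈ Ioc 0 Q, omegaWeight (1 / 2) r * gcdAvg r * ψ r := by
  set w : ℕ → ℝ := omegaWeight (1 / 2) with hw
  have hw0 : ∀ q, 0 ≤ w q := fun q => omegaWeight_nonneg (by norm_num) q
  set X : ℕ → ℝ → ℝ := fun q β => nearInd (ψ q) (q * β - γ q) - 2 * ψ q with hX
  have hXm : ∀ q, Measurable (X q) := fun q =>
    ((measurable_nearInd _).comp (by fun_prop)).sub_const _
  have hXb : ∀ q β, |X q β| ≤ 1 + 2 * ψ q := fun q β => by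
    have h1 := nearInd_nonneg (ψ q) (q * β - γ q)
    have h2 := nearInd_le_one (ψ q) (q * β - γ q)
    have h3 := hψ q
    exact abs_le.2 ⟨by simp only [hX]; linarith, by simp only [hX]; linarith⟩
  have hXint : ∀ q r, IntervalIntegrable (fun β => w q * w r * (X q β * X r β)) volume 0 1 := by
    intro q r
    refine IntervalIntegrable.const_mul (intervalIntegrable_of_bounded ((hXm q).mul (hXm r))
      (C := (1 + 2 * ψ q) * (1 + 2 * ψ r)) (fun β => ?_) 0 1) _
    change |X q β * X r β| ≤ _
    rw [abs_mul]
    exact mul_le_mul (hXb q β) (hXb r β) (abs_nonneg _) (by linarith [hψ q])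
  have hexp : ∀ β, (∑ q ∈ Ioc n Q, w q * X q β) ^ 2 =
      ∑ q ∈ Ioc n Q, ∑ r ∈ Ioc n Q, w q * w r * (X q β * X r β) := fun β => by
    rw [sq, sum_mul_sum]
    exact sum_congr rfl fun q _ => sum_congr rfl fun r _ => by ring
  change ∫ β in (0 : ℝ)..1, (∑ q ∈ Ioc n Q, w q * X q β) ^ 2 ≤ _
  simp only [hexp]
  rw [intervalIntegral.integral_finsetSum fun q _ => by
    simpa only [Finset.sum_fn] using IntervalIntegrable.sum (Ioc n Q) fun r _ => hXint q r]
  set E : ℕ → ℕ → ℝ := fun q r => if q ≤ r then w q * w r * (2 * ψ r * (Nat.gcd q r / r)) else 0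
    with hE
  have hE0 : ∀ q r, 0 ≤ E q r := fun q r => by
    have := hw0 q; have := hw0 r; have := (hψ r).le
    simp only [hE]; split_ifs <;> positivity
  have hterm : ∀ q ∈ Ioc n Q, ∀ r ∈ Ioc n Q,
      ∫ β in (0 : ℝ)..1, w q * w r * (X q β * X r β) ≤ E q r + E r q := by
    have main : ∀ q ∈ Ioc n Q, ∀ r ∈ Ioc n Q, q ≤ r →
        ∫ β in (0 : ℝ)..1, w q * w r * (X q β * X r β) ≤ E q r := by
      intro q hq r hr hqr
      rw [mem_Ioc] at hq hr
      rw [intervalIntegral.integral_const_mul]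
      simp only [hE, if_pos hqr]
      exact mul_le_mul_of_nonneg_left (integral_centred_nearInd_mul_le (hψ q).le (hhalf q hq.1)
        (hψ r).le (hhalf r hr.1) (by omega) (by omega) _ _) (mul_nonneg (hw0 q) (hw0 r))
    intro q hq r hr
    rcases le_total q r with h | h
    · exact (main q hq r hr h).trans (le_add_of_nonneg_right (hE0 r q))
    · have h2 := main r hr q hq h
      have e : ∀ β, w q * w r * (X q β * X r β) = w r * w q * (X r β * X q β) := fun β => by ring
      simp only [e]
      exact h2.trans (le_add_of_nonneg_left (hE0 q r))
  have hrow : ∀ r ∈ Ioc n Q, ∑ q ∈ Ioc n Q, E q r ≤ 2 * (w r * gcdAvg r * ψ r) := by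
    intro r hr
    rw [mem_Ioc] at hr
    have hψr := (hψ r).le
    have hwr := hw0 r
    calc ∑ q ∈ Ioc n Q, E q r
        = ∑ q ∈ (Ioc n Q).filter (· ≤ r), w q * w r * (2 * ψ r * (Nat.gcd q r / r)) := by
          rw [sum_filter]
      _ ≤ ∑ q ∈ Ioc 0 r, w q * w r * (2 * ψ r * (Nat.gcd q r / r)) := by
          refine sum_le_sum_of_subset_of_nonneg (fun q hq => ?_) fun q _ _ => ?_
          · simp only [mem_filter, mem_Ioc] at hq ⊢; omega
          · have := hw0 q; positivity
      _ = 2 * (w r * gcdAvg r * ψ r) := by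
          rw [gcdAvg, sum_div, mul_sum, sum_mul, mul_sum]
          exact sum_congr rfl fun q _ => by simp only [hw]; ring
  calc ∑ q ∈ Ioc n Q, ∫ β in (0 : ℝ)..1, ∑ r ∈ Ioc n Q, w q * w r * (X q β * X r β)
      = ∑ q ∈ Ioc n Q, ∑ r ∈ Ioc n Q, ∫ β in (0 : ℝ)..1, w q * w r * (X q β * X r β) :=
        sum_congr rfl fun q _ => intervalIntegral.integral_finsetSum fun r _ => hXint q r
    _ ≤ ∑ q ∈ Ioc n Q, ∑ r ∈ Ioc n Q, (E q r + E r q) :=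
        sum_le_sum fun q hq => sum_le_sum fun r hr => hterm q hq r hr
    _ = 2 * ∑ r ∈ Ioc n Q, ∑ q ∈ Ioc n Q, E q r := by
        simp only [sum_add_distrib]
        rw [sum_comm]; ring
    _ ≤ 2 * ∑ r ∈ Ioc n Q, 2 * (w r * gcdAvg r * ψ r) := by
        gcongr with r hr
        exact hrow r hr
    _ ≤ 2 * ∑ r ∈ Ioc 0 Q, 2 * (w r * gcdAvg r * ψ r) := by
        refine mul_le_mul_of_nonneg_left (sum_le_sum_of_subset_of_nonneg
          (Ioc_subset_Ioc_left (Nat.zero_le n)) fun r _ _ => ?_) zero_le_two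
        have := hw0 r; have := gcdAvg_nonneg r; have := (hψ r).le
        positivity
    _ = 4 * ∑ r ∈ Ioc 0 Q, w r * gcdAvg r * ψ r := by
        rw [← mul_sum]; ring

/-- Chebyshev's inequality: on the set of `β` which escape all the events with `q > n`, the weighted
count over `n < q ≤ Q` vanishes, while its mean is `2 ∑ w(q) ψ(q)`. -/
lemma sq_mul_measure_le (γ : ℕ → ℝ) {ψ : ℕ → ℝ} (hψ : ∀ q, 0 < ψ q) {n : ℕ} (Q : ℕ)
    (hhalf : ∀ q, n < q → ψ q ≤ 1 / 2) :
    (∑ q ∈ Ioc n Q, omegaWeight (1 / 2) q * ψ q) ^ 2 *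
        volume.real (Set.Ioc (0 : ℝ) 1 ∩ {β | ∀ q, n < q → ψ q ≤ distNearestInt (q * β - γ q)}) ≤
      ∑ r ∈ Ioc 0 Q, omegaWeight (1 / 2) r * gcdAvg r * ψ r := by
  have hmain := integral_sq_sum_le γ hψ Q hhalf
  set Z : Set ℝ := {β | ∀ q, n < q → ψ q ≤ distNearestInt (q * β - γ q)} with hZ
  set w : ℕ → ℝ := omegaWeight (1 / 2) with hw
  set M := ∑ q ∈ Ioc n Q, w q * ψ q with hM
  set F : ℝ → ℝ := fun β => (∑ q ∈ Ioc n Q, w q * (nearInd (ψ q) (q * β - γ q) - 2 * ψ q)) ^ 2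
    with hF
  have hZm : MeasurableSet Z := by
    have : Z = ⋂ q : ℕ, ⋂ _ : n < q, {β : ℝ | ψ q ≤ distNearestInt (q * β - γ q)} := by
      ext β; simp [hZ]
    rw [this]
    exact MeasurableSet.iInter fun q => MeasurableSet.iInter fun _ =>
      measurableSet_le measurable_const (measurable_distNearestInt.comp (by fun_prop))
  have hFm : Measurable F := by
    refine Measurable.pow_const (Finset.measurable_fun_sum _ fun q _ => ?_) 2
    exact (((measurable_nearInd _).comp (by fun_prop)).sub_const _).const_mul _
  have hFint : IntervalIntegrable F volume 0 1 := by
    refine intervalIntegrable_of_bounded hFm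
      (C := (∑ q ∈ Ioc n Q, |w q| * (1 + 2 * ψ q)) ^ 2) (fun β => ?_) 0 1
    simp only [hF]
    rw [abs_pow]
    gcongr
    refine (abs_sum_le_sum_abs _ _).trans (sum_le_sum fun q _ => ?_)
    rw [abs_mul]
    have h1 := nearInd_nonneg (ψ q) (q * β - γ q)
    have h2 := nearInd_le_one (ψ q) (q * β - γ q)
    have h3 := hψ q
    gcongr
    exact abs_le.2 ⟨by linarith, by linarith⟩
  have hFZ : ∀ β ∈ Set.Ioc (0 : ℝ) 1 ∩ Z, F β = 4 * M ^ 2 := by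
    rintro β ⟨-, hβ⟩
    have : ∀ q ∈ Ioc n Q, w q * (nearInd (ψ q) (q * β - γ q) - 2 * ψ q) = -2 * (w q * ψ q) := by
      intro q hq
      have h0 : nearInd (ψ q) (q * β - γ q) = 0 :=
        Set.indicator_of_notMem (by simpa using hβ q (mem_Ioc.1 hq).1) _
      rw [h0]; ring
    simp only [hF]
    rw [sum_congr rfl this, ← mul_sum]
    ring
  rw [intervalIntegral.integral_of_le zero_le_one] at hmain
  have hIon : IntegrableOn F (Set.Ioc 0 1) :=
    (intervalIntegrable_iff_integrableOn_Ioc_of_le zero_le_one).1 hFint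
  have h1 : ∫ β in Set.Ioc (0 : ℝ) 1 ∩ Z, F β ≤ ∫ β in Set.Ioc (0 : ℝ) 1, F β :=
    setIntegral_mono_set hIon (ae_of_all _ fun β => sq_nonneg _)
      (ae_of_all _ fun β hβ => hβ.1)
  rw [setIntegral_congr_fun (measurableSet_Ioc.inter hZm) hFZ, setIntegral_const,
    smul_eq_mul] at h1
  linarith

/-! ### Divergence and the null set -/

lemma sum_mul_nonneg_of_antitone {c ψ : ℕ → ℝ} (hψ : ∀ q, 0 ≤ ψ q) (hanti : Antitone ψ)
    (h : ∀ N, 0 ≤ ∑ q ∈ Ioc 0 N, c q) (Q : ℕ) : 0 ≤ ∑ q ∈ Ioc 0 Q, c q * ψ q := by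
  suffices H : (∑ q ∈ Ioc 0 Q, c q) * ψ Q ≤ ∑ q ∈ Ioc 0 Q, c q * ψ q from
    (mul_nonneg (h Q) (hψ Q)).trans H
  induction Q with
  | zero => simp
  | succ Q ih =>
    rw [sum_Ioc_succ_top (Nat.zero_le Q), sum_Ioc_succ_top (Nat.zero_le Q)]
    have := mul_le_mul_of_nonneg_left (hanti (Nat.le_succ Q)) (h Q)
    linarith

/-- Partial summation: an inequality between summatory functions survives the insertion of a
decreasing factor. -/
lemma sum_mul_le_sum_mul_of_antitone {a b ψ : ℕ → ℝ} (hψ : ∀ q, 0 ≤ ψ q) (hanti : Antitone ψ)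
    (h : ∀ N, ∑ q ∈ Ioc 0 N, a q ≤ ∑ q ∈ Ioc 0 N, b q) (Q : ℕ) :
    ∑ q ∈ Ioc 0 Q, a q * ψ q ≤ ∑ q ∈ Ioc 0 Q, b q * ψ q := by
  have := sum_mul_nonneg_of_antitone (c := fun q => b q - a q) hψ hanti
    (fun N => by rw [sum_sub_distrib]; linarith [h N]) Q
  simp only [sub_mul, sum_sub_distrib] at this
  linarith

lemma sum_one_div_sqrt_ell_le : ∃ C : ℝ, 0 < C ∧ ∀ N : ℕ,
    ∑ q ∈ Ioc 0 N, 1 / √(ell q) ≤ C * omegaSum (1 / 2) N := by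
  obtain ⟨c, hc, hlow⟩ := le_omegaSum_half
  refine ⟨4 / c, by positivity, fun N => ?_⟩
  have h1 := sum_div_sqrt_ell_le (a := fun _ => 1) (fun _ => zero_le_one) (fun _ => le_rfl) N
  have hs1 : 1 ≤ √(ell N) := Real.one_le_sqrt.2 (one_le_ell N)
  have hs : 0 < √(ell N) := by linarith
  simp only [sum_const, Nat.card_Ioc, Nat.sub_zero, nsmul_eq_mul, mul_one] at h1
  have h2 : √(N : ℝ) ≤ 2 * N / √(ell N) := by
    rw [le_div_iff₀ hs]
    refine le_trans ?_ (sqrt_mul_ell_le N)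
    gcongr
    nlinarith [Real.sq_sqrt (ell_pos N).le]
  have h3 : N / √(ell N) ≤ omegaSum (1 / 2) N / c := by
    rw [div_le_div_iff₀ hs hc]
    linarith [hlow N]
  calc _ ≤ 4 * (N / √(ell N)) := by
        have : 2 * (N : ℝ) / √(ell N) = 2 * (N / √(ell N)) := by ring
        linarith
    _ ≤ 4 * (omegaSum (1 / 2) N / c) := by gcongr
    _ = _ := by ring

lemma tendsto_iterLog (m : ℕ) : Filter.Tendsto (iterLog m) Filter.atTop Filter.atTop := by
  induction m with
  | zero => exact Filter.tendsto_id
  | succ m ih => exact Real.tendsto_log_atTop.comp ih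

/-- The iterated logarithms beyond the first only help the series converge, so its divergence gives
that of `∑ ψ(q) / √(1 + log q)`. -/
lemma not_summable_div_sqrt_ell {ψ : ℕ → ℝ} (hψ : ∀ q, 0 < ψ q) {ε : ℝ} (hε : 0 < ε) {k : ℕ}
    (hk : 2 ≤ k)
    (hdiv : ¬ Summable (fun q : ℕ =>
      ψ q / √((∏ m ∈ Icc 1 (k - 1), iterLog m (q : ℝ)) * iterLog k (q : ℝ) ^ ((1 : ℝ) + ε)))) :
    ¬ Summable fun q : ℕ => ψ q / √(ell q) := by
  intro hsum
  refine hdiv (Summable.of_norm_bounded_eventually_nat (hsum.mul_left 2) ?_)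
  have hlarge : ∀ᶠ q : ℕ in Filter.atTop, ∀ m ∈ Icc 1 k, 1 ≤ iterLog m (q : ℝ) := by
    rw [Filter.eventually_all_finset]
    exact fun m _ => ((tendsto_iterLog m).comp tendsto_natCast_atTop_atTop).eventually_ge_atTop 1
  filter_upwards [hlarge] with q hq
  have hell : ell q ≤ 4 * Real.log q := by
    have : 1 ≤ Real.log q := hq 1 (by simp; omega)
    unfold ell; linarith
  have hprod : Real.log q ≤ ∏ m ∈ Icc 1 (k - 1), iterLog m (q : ℝ) := by
    rw [← mul_prod_erase (Icc 1 (k - 1)) (fun m => iterLog m (q : ℝ)) (a := 1)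
      (by simp; omega)]
    have h1 : 1 ≤ ∏ m ∈ (Icc 1 (k - 1)).erase 1, iterLog m (q : ℝ) :=
      prod_induction _ (fun x : ℝ => 1 ≤ x) (fun a b => one_le_mul_of_one_le_of_one_le) le_rfl
        fun m hm => hq m (by simp only [mem_erase, mem_Icc] at hm ⊢; omega)
    exact le_mul_of_one_le_right (zero_le_one.trans (hq 1 (by simp; omega))) h1
  have hpow : 1 ≤ iterLog k (q : ℝ) ^ ((1 : ℝ) + ε) :=
    Real.one_le_rpow (hq k (by simp; omega)) (by linarith)
  have hlog0 : 0 < Real.log q := by linarith [ell_pos q]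
  set P := (∏ m ∈ Icc 1 (k - 1), iterLog m (q : ℝ)) * iterLog k (q : ℝ) ^ ((1 : ℝ) + ε)
  have hP : Real.log q ≤ P := hprod.trans (le_mul_of_one_le_right (hlog0.le.trans hprod) hpow)
  have hs : √(ell q) ≤ 2 * √P := by
    rw [Real.sqrt_le_left (by positivity), mul_pow, Real.sq_sqrt (hlog0.le.trans hP)]
    linarith
  have hψq := hψ q
  rw [Real.norm_of_nonneg (by positivity)]
  have hP0 : 0 < √P := Real.sqrt_pos.2 (hlog0.trans_le hP)
  have hl0 : 0 < √(ell q) := Real.sqrt_pos.2 (ell_pos q)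
  rw [← mul_div_assoc, div_le_div_iff₀ hP0 hl0]
  nlinarith

lemma exists_forall_lt_sum_omegaWeight_mul {ψ : ℕ → ℝ} (hψ : ∀ q, 0 < ψ q) (hanti : Antitone ψ)
    (hdiv : ¬ Summable fun q : ℕ => ψ q / √(ell q)) (B : ℝ) :
    ∃ N, ∀ Q ≥ N, B < ∑ q ∈ Ioc 0 Q, omegaWeight (1 / 2) q * ψ q := by
  obtain ⟨C, hC, hcomp⟩ := sum_one_div_sqrt_ell_le
  have htend := (not_summable_iff_tendsto_nat_atTop_of_nonneg (fun q =>
    div_nonneg (hψ q).le (Real.sqrt_nonneg _))).1 hdiv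
  obtain ⟨N, hN⟩ := Filter.eventually_atTop.1 (htend.eventually_gt_atTop (C * B + ψ 0 / √(ell 0)))
  refine ⟨N, fun Q hQ => ?_⟩
  have h1 := hN (Q + 1) (by omega)
  have e : ∑ q ∈ range (Q + 1), ψ q / √(ell q) =
      ∑ q ∈ Ioc 0 Q, 1 / √(ell q) * ψ q + ψ 0 / √(ell 0) := by
    have hr : range (Q + 1) = insert 0 (Ioc 0 Q) := by
      ext q; simp only [mem_range, mem_insert, mem_Ioc]; omega
    rw [hr, sum_insert (by simp), add_comm]
    congr 1
    exact sum_congr rfl fun q _ => by ring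
  have h2 := sum_mul_le_sum_mul_of_antitone (a := fun q => 1 / √(ell q))
    (b := fun q => C * omegaWeight (1 / 2) q) (fun q => (hψ q).le) hanti
    (fun N => by rw [← mul_sum]; exact hcomp N) Q
  simp only [mul_assoc, ← mul_sum] at h2
  rw [e] at h1
  exact lt_of_mul_lt_mul_left (by linarith) hC.le

/-- Almost every `β` satisfies `‖qβ - γ_q‖ < ψ(q)` for some `q > n`. -/
lemma volume_forall_le_distNearestInt (γ : ℕ → ℝ) {ψ : ℕ → ℝ} (hψ : ∀ q, 0 < ψ q)
    (hanti : Antitone ψ) (hdiv : ¬ Summable fun q : ℕ => ψ q / √(ell q)) (n : ℕ) :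
    volume (Set.Ioc (0 : ℝ) 1 ∩ {β | ∀ q, n < q → ψ q ≤ distNearestInt (q * β - γ q)}) = 0 := by
  by_cases hhalf : ∀ q, n < q → ψ q ≤ 1 / 2
  · obtain ⟨C, hC, hgcd⟩ := sum_omegaWeight_mul_gcdAvg_le
    set Z := Set.Ioc (0 : ℝ) 1 ∩ {β | ∀ q, n < q → ψ q ≤ distNearestInt (q * β - γ q)} with hZ
    have hZfin : volume Z ≠ ⊤ :=
      ne_top_of_le_ne_top (by simp) (measure_mono (Set.inter_subset_left : Z ⊆ Set.Ioc 0 1))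
    rw [← measureReal_eq_zero_iff hZfin]
    by_contra hne
    have hv : 0 < volume.real Z := lt_of_le_of_ne measureReal_nonneg (Ne.symm hne)
    set S : ℕ → ℝ := fun Q => ∑ q ∈ Ioc 0 Q, omegaWeight (1 / 2) q * ψ q with hS
    have hS0 : ∀ Q, 0 ≤ S Q := fun Q =>
      sum_nonneg fun q _ => mul_nonneg (omegaWeight_nonneg (by norm_num) q) (hψ q).le
    obtain ⟨N, hN⟩ := exists_forall_lt_sum_omegaWeight_mul hψ hanti hdiv
      (2 * S n + 4 * C / volume.real Z)
    set Q := max n N with hQ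
    have hSQ : 2 * S n + 4 * C / volume.real Z < S Q := hN Q (le_max_right _ _)
    have hsplit : ∑ q ∈ Ioc n Q, omegaWeight (1 / 2) q * ψ q = S Q - S n := by
      rw [eq_sub_iff_add_eq, add_comm]
      exact sum_Ioc_consecutive _ (Nat.zero_le n) (le_max_left _ _)
    have hcheb := sq_mul_measure_le γ hψ Q hhalf
    have hup := sum_mul_le_sum_mul_of_antitone (a := fun r => omegaWeight (1 / 2) r * gcdAvg r)
      (b := fun q => C * omegaWeight (1 / 2) q) (fun q => (hψ q).le) hanti
      (fun N => by rw [← mul_sum]; exact hgcd N) Q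
    simp only [mul_assoc, ← mul_sum] at hup hcheb
    rw [hsplit] at hcheb
    have h1 : (S Q - S n) ^ 2 * volume.real Z ≤ C * S Q := hcheb.trans hup
    have hpos : 0 < 4 * C / volume.real Z := by positivity
    have h2 : 4 * C < S Q * volume.real Z := by
      rw [← div_lt_iff₀ hv]
      linarith [hS0 n]
    have hSQ0 : 0 < S Q := by linarith [hS0 n]
    have h3 : (S Q / 2) ^ 2 * volume.real Z ≤ C * S Q := by
      refine le_trans ?_ h1
      have : S Q / 2 ≤ S Q - S n := by linarith
      gcongr
    nlinarith
  · push Not at hhalf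
    obtain ⟨q, hq, hlt⟩ := hhalf
    refine measure_mono_null (fun β hβ => ?_) measure_empty
    exact absurd ((hβ.2 q hq).trans (abs_sub_round _)) (not_le.2 hlt)

end

/-- Moving-target Khintchine theorem of Michaud–Ramírez.
If ψ is monotone decreasing and
Σ ψ(q)/√(log q · (log log q) ⋯ (log^{(k−1)} q) · (log^{(k)} q)^{1+ε}) = ∞ for some ε > 0 and
integer k ≥ 2, then for any real sequence (γ_q), the set
W(ψ,γ) = { β ∈ [0,1] : ‖β − (a + γ_q)/q‖ < ψ(q)/q for infinitely many (a,q) ∈ ℤ × ℕ }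
has Lebesgue measure 1. -/
theorem stmt3 (γ : ℕ → ℝ) (ψ : ℕ → ℝ) (hψpos : ∀ q, 0 < ψ q) (hψanti : Antitone ψ)
    (ε : ℝ) (hε : 0 < ε) (k : ℕ) (hk : 2 ≤ k)
    (hdiv : ¬ Summable (fun q : ℕ =>
      ψ q / Real.sqrt ((∏ m ∈ Finset.Icc 1 (k - 1), iterLog m (q : ℝ)) *
        iterLog k (q : ℝ) ^ ((1 : ℝ) + ε)))) :
    volume {β : ℝ | β ∈ Set.Icc (0 : ℝ) 1 ∧
      {p : ℤ × ℕ | 1 ≤ p.2 ∧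
        distNearestInt (β - ((p.1 : ℝ) + γ p.2) / (p.2 : ℝ)) < ψ p.2 / (p.2 : ℝ)}.Infinite} =
      1 := by
  have hdiv' := not_summable_div_sqrt_ell hψpos hε hk hdiv
  set W : Set ℝ := {β : ℝ | β ∈ Set.Icc (0 : ℝ) 1 ∧
      {p : ℤ × ℕ | 1 ≤ p.2 ∧
        distNearestInt (β - ((p.1 : ℝ) + γ p.2) / (p.2 : ℝ)) < ψ p.2 / (p.2 : ℝ)}.Infinite}
    with hW
  set Z : Set ℝ := ⋃ n : ℕ, Set.Ioc (0 : ℝ) 1 ∩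
    {β | ∀ q, n < q → ψ q ≤ distNearestInt (q * β - γ q)} with hZ
  have hZ0 : volume Z = 0 := measure_iUnion_null fun n =>
    volume_forall_le_distNearestInt γ hψpos hψanti hdiv' n
  have hsub : Set.Ioc (0 : ℝ) 1 \ Z ⊆ W := by
    rintro β ⟨hβ, hβZ⟩
    refine ⟨Set.Ioc_subset_Icc_self hβ, ?_⟩
    have hex : ∀ n : ℕ, ∃ q, n < q ∧ distNearestInt (q * β - γ q) < ψ q := by
      intro n
      by_contra hcon
      push Not at hcon
      exact hβZ (Set.mem_iUnion.2 ⟨n, hβ, hcon⟩)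
    -- The pairs `(a, q)` are infinite in number already because their second entries are unbounded.
    refine Set.Infinite.of_image Prod.snd (Set.infinite_of_forall_exists_gt fun n => ?_)
    obtain ⟨q, hnq, hq⟩ := hex n
    refine ⟨q, ⟨(round (q * β - γ q), q), ⟨by dsimp only; omega, ?_⟩, rfl⟩, hnq⟩
    have hq0 : (0 : ℝ) < q := by exact_mod_cast (Nat.zero_le n).trans_lt hnq
    dsimp only
    calc distNearestInt (β - ((round (q * β - γ q) : ℝ) + γ q) / q)
        ≤ |β - ((round (q * β - γ q) : ℝ) + γ q) / q| := by
          have h := round_le (β - ((round (q * β - γ q) : ℝ) + γ q) / q) 0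
          rwa [Int.cast_zero, sub_zero] at h
      _ = distNearestInt (q * β - γ q) / q := by
          rw [distNearestInt, ← abs_of_pos hq0, ← abs_div, abs_of_pos hq0]
          congr 1
          field_simp
          ring
      _ < ψ q / q := by gcongr
  refine le_antisymm ?_ ?_
  · calc volume W ≤ volume (Set.Icc (0 : ℝ) 1) := measure_mono fun β hβ => hβ.1
      _ = 1 := by simp
  · calc (1 : ENNReal) = volume (Set.Ioc (0 : ℝ) 1) := by simp
      _ = volume (Set.Ioc (0 : ℝ) 1 \ Z) := (measure_sdiff_null hZ0).symm
      _ ≤ volume W := measure_mono hsub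
end

section
/- Fix an integer y ≥ 1 and an integer z. Then there exist a constant c > 0 (depending only on y) and x₀ such that for all x ≥ x₀: Σ_{n ≤ x, n ≡ z (mod y)} 1/d(n) ≥ c · x / √(log x), where d(n) denotes the number of positive divisors of n. -/
/-!
Write `d` for the divisor-counting function. The residue class costs only a constant factor: every
`n` coprime to `y` has a multiplier `b ∈ [1, y]` with `n * b ≡ z (mod y)`, and
`d (n * b) ≤ y * d n`, so it suffices to bound `F N = ∑ 1 / d n` over `n ≤ N` coprime to `y` from
below by a multiple of `N / √(log N)` (`sum_coprime_le_sum_residue`). No information on primes in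
arithmetic progressions is needed, and `z` need not be coprime to `y`.

For `F`, use `log N ≥ log n ≥ ∑_{p ∣ n} log p` and `d (m * p) ≤ 2 * d m`, writing `n = m * p`, to get
`log N * F N ≥ ∑_m 1 / (2 * d m) * ∑_{p ≤ N / m, p ∤ y} log p` (`sum_mul_le_log_mul_sum`).
Chebyshev's lower bound makes the right-hand side at least a multiple of `N * T (N / K)`, where
`T M = ∑ 1 / (m * d m)` over `m ≤ M` coprime to `y` and `K` is a constant.

Finally `T M` is at least a multiple of `√(log M)` for large `M` (`sqrt_le_sum_invTau_div`): for
squarefree `s` the Dirichlet convolution of `1 / d` with itself equals `1`, so `T M ^ 2` dominates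
the sum of `1 / s` over squarefree `s ≤ M` coprime to `y`. As every `n` is a square times a
squarefree number and `∑ 1 / k ^ 2 ≤ 2`, that sum is at least half of the sum of `1 / n` over `n ≤ M`
coprime to `y`, which is at least `(log M - log y) / y` because it contains all `n ≡ 1 (mod y)`.
-/

open Real

/-- The reciprocal `1 / d n` of the number of divisors of `n`, with the junk value `0` at `n = 0`. -/
noncomputable def invTau (n : ℕ) : ℝ := 1 / (n.divisors.card : ℝ)

/-- The integers `1 ≤ n ≤ N` coprime to `y`. -/
def coprimeUpTo (y N : ℕ) : Finset ℕ := (Finset.Icc 1 N).filter (fun n => n.Coprime y)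

lemma mem_coprimeUpTo {y N n : ℕ} :
    n ∈ coprimeUpTo y N ↔ (1 ≤ n ∧ n ≤ N) ∧ n.Coprime y := by
  simp [coprimeUpTo]

lemma invTau_nonneg (n : ℕ) : 0 ≤ invTau n := by unfold invTau; positivity

lemma card_divisors_mul_le (a b : ℕ) :
    (a * b).divisors.card ≤ a.divisors.card * b.divisors.card := by
  classical
  rw [Nat.divisors_mul]
  exact Finset.card_mul_le

lemma invTau_le_mul {a b k : ℕ} (ha : a ≠ 0) (hb : b ≠ 0) (hk : b.divisors.card ≤ k) :
    invTau a ≤ k * invTau (a * b) := by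
  have h1 : 0 < a.divisors.card := Finset.card_pos.mpr ⟨1, by simp [ha]⟩
  have h2 : 0 < (a * b).divisors.card := Finset.card_pos.mpr ⟨1, by simp [ha, hb]⟩
  have h3 : ((a * b).divisors.card : ℝ) ≤ k * a.divisors.card := by
    have := (card_divisors_mul_le a b).trans (Nat.mul_le_mul_left _ hk)
    rw [mul_comm (k : ℝ)]
    exact_mod_cast this
  unfold invTau
  rw [mul_one_div, div_le_div_iff₀ (by exact_mod_cast h1) (by exact_mod_cast h2)]
  linarith

/-- The Dirichlet convolution of `1 / d` with itself is `1` on squarefree numbers: each of the `d s`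
factorizations `s = a * b` is coprime, hence contributes `1 / (d a * d b) = 1 / d s`. -/
lemma sum_invTau_mul_invTau_of_squarefree {s : ℕ} (hs : Squarefree s) :
    ∑ q ∈ s.divisorsAntidiagonal, invTau q.1 * invTau q.2 = 1 := by
  have h0 : s ≠ 0 := hs.ne_zero
  have hpos : (0 : ℝ) < s.divisors.card := by
    exact_mod_cast Finset.card_pos.mpr ⟨1, by simp [h0]⟩
  have : ∀ q ∈ s.divisorsAntidiagonal, invTau q.1 * invTau q.2 = 1 / (s.divisors.card : ℝ) := by
    intro q hq
    have hm := (Nat.mem_divisorsAntidiagonal.mp hq).1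
    have hc : q.1.Coprime q.2 := by
      rw [← hm] at hs
      exact Nat.coprime_of_squarefree_mul hs
    rw [← hm, hc.card_divisors_mul]
    unfold invTau
    push_cast
    rw [one_div_mul_one_div]
  rw [Finset.sum_congr rfl this, Finset.sum_const, nsmul_eq_mul]
  have hcard : s.divisorsAntidiagonal.card = s.divisors.card := by
    rw [← Nat.map_div_right_divisors, Finset.card_map]
  rw [hcard]
  field_simp

/-- Expanding the square and grouping the pairs `(a, b)` by their product `s`, the squarefree `s`
alone already contribute the left-hand side. -/
lemma sum_squarefree_le_sq (y N : ℕ) :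
    ∑ s ∈ (coprimeUpTo y N).filter Squarefree, (1 : ℝ) / s ≤
      (∑ m ∈ coprimeUpTo y N, invTau m / m) ^ 2 := by
  classical
  rw [sq, Finset.sum_mul_sum, ← Finset.sum_product']
  refine le_trans ?_ (Finset.sum_fiberwise_le_sum_of_sum_fiber_nonneg
    (t := (coprimeUpTo y N).filter Squarefree) (g := fun q : ℕ × ℕ => q.1 * q.2) ?_)
  · refine Finset.sum_le_sum fun s hs => ?_
    obtain ⟨hsU, hsq⟩ := Finset.mem_filter.mp hs
    obtain ⟨⟨hs1, hsN⟩, hsc⟩ := mem_coprimeUpTo.mp hsU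
    have hexp : (1 : ℝ) / s =
        ∑ q ∈ s.divisorsAntidiagonal, 1 / (s : ℝ) * (invTau q.1 * invTau q.2) := by
      rw [← Finset.mul_sum, sum_invTau_mul_invTau_of_squarefree hsq, mul_one]
    rw [hexp]
    refine le_trans (le_of_eq ?_) (Finset.sum_le_sum_of_subset_of_nonneg
      (s := s.divisorsAntidiagonal) ?_ ?_)
    · refine Finset.sum_congr rfl fun q hq => ?_
      have hm := (Nat.mem_divisorsAntidiagonal.mp hq).1
      rw [← hm]
      push_cast
      rw [div_mul_div_comm, one_div_mul_eq_div]
    · intro q hq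
      have hm := (Nat.mem_divisorsAntidiagonal.mp hq).1
      have hd1 : q.1 ∣ s := ⟨_, hm.symm⟩
      have hd2 : q.2 ∣ s := ⟨q.1, by rw [mul_comm]; exact hm.symm⟩
      have mem : ∀ d, d ∣ s → d ∈ coprimeUpTo y N := fun d hd =>
        mem_coprimeUpTo.mpr ⟨⟨Nat.pos_of_dvd_of_pos hd hs1,
          (Nat.le_of_dvd hs1 hd).trans hsN⟩, Nat.Coprime.coprime_dvd_left hd hsc⟩
      exact Finset.mem_filter.mpr ⟨Finset.mem_product.mpr ⟨mem _ hd1, mem _ hd2⟩, hm⟩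
    · intro q _ _
      have := invTau_nonneg q.1
      have := invTau_nonneg q.2
      positivity
  · intro s _
    refine Finset.sum_nonneg fun q _ => ?_
    have := invTau_nonneg q.1
    have := invTau_nonneg q.2
    positivity

lemma sum_one_div_sq_le (N : ℕ) : ∑ k ∈ Finset.Icc 1 N, (1 : ℝ) / (k : ℝ) ^ 2 ≤ 2 := by
  have h := sum_Ioo_inv_sq_le (α := ℝ) 0 (N + 1)
  have hset : Finset.Ioo 0 (N + 1) = Finset.Icc 1 N := by ext; simp; omega
  rw [hset] at h
  simpa using h

/-- Every `n` is `k ^ 2 * s` with `s` squarefree, and `∑ 1 / k ^ 2 ≤ 2`. -/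
lemma sum_one_div_le_squarefree (y N : ℕ) :
    ∑ n ∈ coprimeUpTo y N, (1 : ℝ) / n ≤
      2 * ∑ s ∈ (coprimeUpTo y N).filter Squarefree, (1 : ℝ) / s := by
  classical
  have h1 : ∑ n ∈ coprimeUpTo y N, (1 : ℝ) / n ≤
      ∑ q ∈ Finset.Icc 1 N ×ˢ (coprimeUpTo y N).filter Squarefree,
        (1 : ℝ) / (q.1 : ℝ) ^ 2 * (1 / q.2) := by
    refine le_trans ?_ (Finset.sum_fiberwise_le_sum_of_sum_fiber_nonneg
      (t := coprimeUpTo y N) (g := fun q : ℕ × ℕ => q.1 ^ 2 * q.2)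
      fun _ _ => Finset.sum_nonneg fun q _ => by positivity)
    refine Finset.sum_le_sum fun n hn => ?_
    obtain ⟨⟨hn1, hnN⟩, hnc⟩ := mem_coprimeUpTo.mp hn
    obtain ⟨s, k, hs0, hk0, hks, hsq⟩ := Nat.sq_mul_squarefree_of_pos hn1
    have hkn : k ∣ n := ⟨k * s, by rw [← hks]; ring⟩
    have hsn : s ∣ n := ⟨k ^ 2, by rw [← hks]; ring⟩
    have hmem : (k, s) ∈ (Finset.Icc 1 N ×ˢ (coprimeUpTo y N).filter Squarefree).filter
        (fun q : ℕ × ℕ => q.1 ^ 2 * q.2 = n) := by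
      refine Finset.mem_filter.mpr ⟨Finset.mem_product.mpr ⟨Finset.mem_Icc.mpr
        ⟨hk0, (Nat.le_of_dvd hn1 hkn).trans hnN⟩, Finset.mem_filter.mpr
        ⟨mem_coprimeUpTo.mpr ⟨⟨hs0, (Nat.le_of_dvd hn1 hsn).trans hnN⟩,
          Nat.Coprime.coprime_dvd_left hsn hnc⟩, hsq⟩⟩, hks⟩
    refine le_trans (le_of_eq ?_) (Finset.single_le_sum
      (f := fun q : ℕ × ℕ => (1 : ℝ) / (q.1 : ℝ) ^ 2 * (1 / q.2)) (fun q _ => by positivity) hmem)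
    rw [← hks]
    push_cast
    rw [one_div_mul_one_div]
  refine h1.trans ?_
  rw [Finset.sum_product]
  simp only
  rw [← Finset.sum_mul_sum]
  exact mul_le_mul_of_nonneg_right (sum_one_div_sq_le N)
    (Finset.sum_nonneg fun _ _ => by positivity)

/-- The terms `n = 1 + i * y ≤ (i + 1) * y` with `i < N / y` already give `1 / y` times a harmonic
number. -/
lemma log_le_sum_one_div {y : ℕ} (hy : 1 ≤ y) {N : ℕ} (hN : 1 ≤ N) :
    (Real.log N - Real.log y) / y ≤ ∑ n ∈ coprimeUpTo y N, (1 : ℝ) / n := by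
  classical
  have hy0 : (0 : ℝ) < y := by exact_mod_cast hy
  have hN0 : (0 : ℝ) < N := by exact_mod_cast hN
  have h1 : Real.log N - Real.log y ≤ ∑ i ∈ Finset.range (N / y), (1 : ℝ) / ((i : ℝ) + 1) := by
    have h := log_add_one_le_harmonic (N / y)
    have hle : (N : ℝ) / y ≤ ((N / y + 1 : ℕ) : ℝ) := by
      rw [div_le_iff₀ hy0]
      exact_mod_cast (Nat.lt_mul_of_div_lt (Nat.lt_succ_self (N / y)) hy).le
    rw [← Real.log_div hN0.ne' hy0.ne']
    refine (Real.log_le_log (by positivity) hle).trans (h.trans (le_of_eq ?_))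
    simp [harmonic]
  have h2 : ∑ i ∈ Finset.range (N / y), (1 : ℝ) / ((1 + i * y : ℕ) : ℝ) ≤
      ∑ n ∈ coprimeUpTo y N, (1 : ℝ) / n := by
    have hinj : Set.InjOn (fun i : ℕ => 1 + i * y) (Finset.range (N / y) : Set ℕ) := by
      intro i _ j _ hij
      exact Nat.eq_of_mul_eq_mul_right hy (by simpa using hij)
    rw [← Finset.sum_image (f := fun n : ℕ => (1 : ℝ) / (n : ℝ)) hinj]
    refine Finset.sum_le_sum_of_subset_of_nonneg ?_ fun _ _ _ => by positivity
    intro n hn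
    obtain ⟨i, hi, rfl⟩ := Finset.mem_image.mp hn
    have hi' : i + 1 ≤ N / y := Finset.mem_range.mp hi
    have hi'' : (i + 1) * y ≤ N := (Nat.le_div_iff_mul_le hy).mp hi'
    refine mem_coprimeUpTo.mpr ⟨⟨by omega, by nlinarith⟩, ?_⟩
    simp
  refine le_trans ?_ h2
  rw [div_le_iff₀ hy0, Finset.sum_mul]
  refine h1.trans (Finset.sum_le_sum fun i _ => ?_)
  have hy1 : (1 : ℝ) ≤ y := by exact_mod_cast hy
  push_cast
  rw [one_div_mul_eq_div, div_le_div_iff₀ (by positivity) (by positivity)]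
  nlinarith

lemma sqrt_le_sum_invTau_div {y : ℕ} (hy : 1 ≤ y) {N : ℕ} (hN : 1 ≤ N) :
    √((Real.log N - Real.log y) / (2 * y)) ≤ ∑ m ∈ coprimeUpTo y N, invTau m / m := by
  apply Real.sqrt_le_iff.mpr
  refine ⟨Finset.sum_nonneg fun m _ => div_nonneg (invTau_nonneg m) (by positivity), ?_⟩
  have h1 := log_le_sum_one_div hy hN
  have h2 := sum_one_div_le_squarefree y N
  have h3 := sum_squarefree_le_sq y N
  have : (Real.log N - Real.log y) / (2 * y) = ((Real.log N - Real.log y) / y) / 2 := by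
    field_simp
  rw [this]
  linarith

lemma sum_log_primeFactors_le {n : ℕ} (hn : n ≠ 0) :
    ∑ p ∈ n.primeFactors, Real.log p ≤ Real.log n := by
  rw [← Real.log_prod (fun p hp => by
    exact_mod_cast (Nat.prime_of_mem_primeFactors hp).ne_zero)]
  have h1 : ∏ p ∈ n.primeFactors, p ≤ n :=
    Nat.le_of_dvd (Nat.pos_of_ne_zero hn) (Nat.prod_primeFactors_dvd n)
  have h2 : 0 < ∏ p ∈ n.primeFactors, p :=
    Finset.prod_pos fun p hp => (Nat.prime_of_mem_primeFactors hp).pos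
  apply Real.log_le_log
  · rw [← Nat.cast_prod]; exact_mod_cast h2
  · rw [← Nat.cast_prod]; exact_mod_cast h1

/-- Dropping the primes dividing `y` from `θ` loses at most `log y`. -/
lemma theta_le_sum_coprime {y : ℕ} (hy : 1 ≤ y) (u : ℕ) :
    Chebyshev.theta u ≤
      ∑ p ∈ (coprimeUpTo y u).filter Nat.Prime, Real.log p + Real.log y := by
  classical
  have hsub : (Finset.Ioc 0 ⌊(u : ℝ)⌋₊).filter Nat.Prime ⊆
      (coprimeUpTo y u).filter Nat.Prime ∪ y.primeFactors := by
    intro p hp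
    obtain ⟨hp1, hpp⟩ := Finset.mem_filter.mp hp
    rw [Nat.floor_natCast, Finset.mem_Ioc] at hp1
    by_cases hpy : p ∣ y
    · exact Finset.mem_union_right _ (Nat.mem_primeFactors.mpr ⟨hpp, hpy, by omega⟩)
    · exact Finset.mem_union_left _ (Finset.mem_filter.mpr ⟨mem_coprimeUpTo.mpr
        ⟨by omega, (Nat.Prime.coprime_iff_not_dvd hpp).mpr hpy⟩, hpp⟩)
  have hnn : ∀ p : ℕ, 0 ≤ Real.log p := fun p => Real.log_natCast_nonneg p
  have h1 := Finset.sum_le_sum_of_subset_of_nonneg (f := fun p : ℕ => Real.log p) hsub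
    fun p _ _ => hnn p
  have h2 := Finset.sum_union_inter (s₁ := (coprimeUpTo y u).filter Nat.Prime)
    (s₂ := y.primeFactors) (f := fun p : ℕ => Real.log p)
  have h3 : 0 ≤ ∑ p ∈ (coprimeUpTo y u).filter Nat.Prime ∩ y.primeFactors, Real.log p :=
    Finset.sum_nonneg fun p _ => hnn p
  have h4 := sum_log_primeFactors_le (n := y) (by omega)
  unfold Chebyshev.theta
  linarith

/-- Chebyshev's lower bound for the primes not dividing `y`. -/
lemma exists_chebyshev_coprime {y : ℕ} (hy : 1 ≤ y) :
    ∃ K : ℕ, 1 ≤ K ∧ ∀ u : ℕ, K ≤ u →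
      (u : ℝ) / 4 ≤ ∑ p ∈ (coprimeUpTo y u).filter Nat.Prime, Real.log p := by
  -- Once `log u ≤ √u / 20` and `u ≥ 20 * (log y + 1)`, the error terms in `Chebyshev.theta_ge`
  -- and the loss `log y` together stay well below `u * (log 2 - 1 / 4)`.
  have ho := (isLittleO_log_rpow_atTop (r := 1 / 2) (by norm_num)).bound
    (c := 1 / 20) (by norm_num)
  obtain ⟨T, hT⟩ := Filter.eventually_atTop.mp ho
  refine ⟨max 1 ⌈max T (20 * (Real.log y + 1))⌉₊, le_max_left _ _, fun u hu => ?_⟩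
  have hu1 : (1 : ℝ) ≤ u := by exact_mod_cast (le_max_left _ _).trans hu
  have hu2 : max T (20 * (Real.log y + 1)) ≤ (u : ℝ) :=
    Nat.ceil_le.mp ((le_max_right _ _).trans hu)
  have hb := hT u ((le_max_left _ _).trans hu2)
  have hc := (le_max_right _ _).trans hu2
  rw [← Real.sqrt_eq_rpow, Real.norm_of_nonneg (Real.log_nonneg hu1),
    Real.norm_of_nonneg (Real.sqrt_nonneg _)] at hb
  have hth := Chebyshev.theta_ge u
  have hle := theta_le_sum_coprime hy u
  have hs := Real.sq_sqrt (zero_le_one.trans hu1)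
  have hs1 : 1 ≤ √(u : ℝ) := Real.one_le_sqrt.mpr hu1
  have hl2 := Real.log_two_gt_d9
  have hl2' := Real.log_two_lt_d9
  have hl : Real.log ((u : ℝ) + 1) ≤ Real.log 2 + Real.log u := by
    rw [← Real.log_mul (by norm_num) (by positivity)]
    exact Real.log_le_log (by positivity) (by linarith)
  have h5 : 2 * √(u : ℝ) * Real.log u ≤ u / 10 := by nlinarith
  have h6 : √(u : ℝ) ≤ u := by nlinarith
  have h7 : (u : ℝ) * 0.69 ≤ u * Real.log 2 := by
    apply mul_le_mul_of_nonneg_left <;> linarith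
  linarith

/-- Grouping the pairs `(m, p)` by `n = m * p`: here `1 / d m ≤ 2 / d n`, and for fixed `n` the
primes `p` are distinct prime factors of `n`, so that their logarithms sum to at most `log n`. -/
lemma sum_mul_le_log_mul_sum (y N : ℕ) :
    ∑ m ∈ coprimeUpTo y N, invTau m / 2 *
        ∑ p ∈ (coprimeUpTo y (N / m)).filter Nat.Prime, Real.log p ≤
      Real.log N * ∑ n ∈ coprimeUpTo y N, invTau n := by
  classical
  have hnn : ∀ p : ℕ, 0 ≤ Real.log p := fun p => Real.log_natCast_nonneg p
  set P := (coprimeUpTo y N).sigma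
    (fun m => (coprimeUpTo y (N / m)).filter Nat.Prime) with hP
  have hmem : ∀ q ∈ P, (1 ≤ q.1 ∧ q.1.Coprime y) ∧ 1 ≤ q.2 ∧ q.2.Coprime y ∧
      q.2.Prime ∧ q.1 * q.2 ≤ N := by
    intro q hq
    obtain ⟨hq1, hq2⟩ := Finset.mem_sigma.mp hq
    obtain ⟨hq2, hqp⟩ := Finset.mem_filter.mp hq2
    rw [mem_coprimeUpTo] at hq1 hq2
    refine ⟨⟨hq1.1.1, hq1.2⟩, hq2.1.1, hq2.2, hqp, ?_⟩
    rw [mul_comm]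
    exact (Nat.le_div_iff_mul_le hq1.1.1).mp hq2.1.2
  have h1 : ∑ m ∈ coprimeUpTo y N, invTau m / 2 *
        ∑ p ∈ (coprimeUpTo y (N / m)).filter Nat.Prime, Real.log p ≤
      ∑ q ∈ P, invTau (q.1 * q.2) * Real.log q.2 := by
    simp_rw [Finset.mul_sum]
    rw [Finset.sum_sigma']
    refine Finset.sum_le_sum fun q hq => ?_
    obtain ⟨⟨h1, _⟩, h2, _, hp, _⟩ := hmem q hq
    have hcard : q.2.divisors.card ≤ 2 := by
      rw [hp.divisors]
      exact Finset.card_le_two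
    have := invTau_le_mul (a := q.1) (b := q.2) (by omega) (by omega) hcard
    push_cast at this
    exact mul_le_mul_of_nonneg_right (by linarith) (hnn _)
  refine h1.trans ?_
  rw [← Finset.sum_fiberwise_of_maps_to (t := coprimeUpTo y N) (g := fun q => q.1 * q.2),
    Finset.mul_sum]
  · refine Finset.sum_le_sum fun n hn => ?_
    obtain ⟨⟨hn1, hnN⟩, _⟩ := mem_coprimeUpTo.mp hn
    have h2 : ∑ q ∈ P with q.1 * q.2 = n, invTau (q.1 * q.2) * Real.log q.2 =
        invTau n * ∑ q ∈ P with q.1 * q.2 = n, Real.log q.2 := by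
      rw [Finset.mul_sum]
      refine Finset.sum_congr rfl fun q hq => ?_
      rw [(Finset.mem_filter.mp hq).2]
    have hinj : Set.InjOn (fun q : (_ : ℕ) × ℕ => q.2) (P.filter (fun q => q.1 * q.2 = n)) := by
      rintro ⟨m, p⟩ hq ⟨m', p'⟩ hq' (rfl : p = p')
      obtain ⟨hqP, hq⟩ := Finset.mem_filter.mp hq
      have hq' := (Finset.mem_filter.mp hq').2
      have := hmem _ hqP
      have : m = m' := Nat.eq_of_mul_eq_mul_right this.2.1 (hq.trans hq'.symm)
      rw [this]
    have h3 : ∑ q ∈ P with q.1 * q.2 = n, Real.log q.2 ≤ Real.log N := by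
      rw [← Finset.sum_image (f := fun p : ℕ => Real.log p) hinj]
      refine (Finset.sum_le_sum_of_subset_of_nonneg (t := n.primeFactors) ?_
        fun p _ _ => hnn p).trans ((sum_log_primeFactors_le (by omega)).trans
          (Real.log_le_log (by exact_mod_cast hn1) (by exact_mod_cast hnN)))
      intro p hp
      obtain ⟨q, hq, rfl⟩ := Finset.mem_image.mp hp
      obtain ⟨hqP, hq⟩ := Finset.mem_filter.mp hq
      exact Nat.mem_primeFactors.mpr ⟨(hmem q hqP).2.2.2.1,
        ⟨q.1, by rw [mul_comm]; exact hq.symm⟩, by omega⟩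
    rw [h2, mul_comm (Real.log N)]
    exact mul_le_mul_of_nonneg_left h3 (invTau_nonneg n)
  · intro q hq
    obtain ⟨⟨h1, hc1⟩, h2, hc2, _, hle⟩ := hmem q hq
    exact mem_coprimeUpTo.mpr ⟨⟨Nat.mul_pos h1 h2, hle⟩, Nat.Coprime.mul_left hc1 hc2⟩

lemma exists_sum_coprime_lower {y : ℕ} (hy : 1 ≤ y) :
    ∃ c : ℝ, 0 < c ∧ ∃ N₀ : ℕ, ∀ N : ℕ, N₀ ≤ N →
      c * N / √(Real.log N) ≤ ∑ n ∈ coprimeUpTo y N, invTau n := by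
  obtain ⟨K, hK1, hK⟩ := exists_chebyshev_coprime hy
  have hy0 : (0 : ℝ) < y := by exact_mod_cast hy
  have hK0 : (0 : ℝ) < K := by exact_mod_cast hK1
  -- `N ≥ (2 * K * y) ^ 2` guarantees `log (N / K) - log y ≥ log N / 2`, rounding included.
  refine ⟨1 / 16 * √(1 / (4 * y)), by positivity, (2 * K * y) ^ 2 + 2, fun N hN => ?_⟩
  have hKy : 1 ≤ K * y := Nat.mul_pos hK1 hy
  have hNK : K ≤ N := by nlinarith [Nat.le_mul_of_pos_right K hy]
  have hN2 : (2 : ℝ) ≤ N := by exact_mod_cast (by omega : 2 ≤ N)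
  have hM1 : 1 ≤ N / K := (Nat.one_le_div_iff hK1).mpr hNK
  have hlog : 0 < Real.log N := Real.log_pos (by linarith)
  have hT := sqrt_le_sum_invTau_div hy hM1
  have hMlow : (N : ℝ) / (2 * K) ≤ ((N / K : ℕ) : ℝ) := by
    rw [div_le_iff₀ (by positivity)]
    have := Nat.lt_mul_of_div_lt (Nat.lt_succ_self (N / K)) hK1
    have h' : N ≤ (N / K) * (2 * K) := by nlinarith
    exact_mod_cast h'
  have hlogM : Real.log N / 2 ≤ Real.log ((N / K : ℕ) : ℝ) - Real.log y := by
    have h1 := Real.log_le_log (by positivity) hMlow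
    have h2 : Real.log ((2 * K * y : ℝ) ^ 2) ≤ Real.log N := by
      apply Real.log_le_log (by positivity)
      exact_mod_cast (by omega : (2 * K * y) ^ 2 ≤ N)
    rw [Real.log_pow, Real.log_mul (by positivity) (by positivity)] at h2
    rw [Real.log_div (by positivity) (by positivity)] at h1
    push_cast at h2
    linarith
  have hT' : √(1 / (4 * y)) * √(Real.log N) ≤
      ∑ m ∈ coprimeUpTo y (N / K), invTau m / m := by
    refine le_trans ?_ hT
    rw [← Real.sqrt_mul (by positivity)]
    apply Real.sqrt_le_sqrt
    rw [le_div_iff₀ (by positivity)]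
    calc 1 / (4 * (y : ℝ)) * Real.log N * (2 * y) = Real.log N / 2 := by field_simp; norm_num
      _ ≤ _ := hlogM
  have hmain : (N : ℝ) / 16 * ∑ m ∈ coprimeUpTo y (N / K), invTau m / m ≤
      Real.log N * ∑ n ∈ coprimeUpTo y N, invTau n := by
    refine le_trans ?_ (sum_mul_le_log_mul_sum y N)
    rw [Finset.mul_sum]
    refine le_trans (Finset.sum_le_sum (g := fun m => invTau m / 2 *
        ∑ p ∈ (coprimeUpTo y (N / m)).filter Nat.Prime, Real.log p) fun m hm => ?_)
      (Finset.sum_le_sum_of_subset_of_nonneg ?_ fun m _ _ => ?_)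
    · obtain ⟨⟨hm1, hmM⟩, _⟩ := mem_coprimeUpTo.mp hm
      have hmK : K * m ≤ N := by
        rw [mul_comm]; exact (Nat.le_div_iff_mul_le hK1).mp hmM
      have hu : K ≤ N / m := (Nat.le_div_iff_mul_le hm1).mpr hmK
      have hm0 : (0 : ℝ) < m := by exact_mod_cast hm1
      have hfl : (N : ℝ) / (2 * m) ≤ ((N / m : ℕ) : ℝ) := by
        rw [div_le_iff₀ (by positivity)]
        have := Nat.lt_mul_of_div_lt (Nat.lt_succ_self (N / m)) hm1
        have h' : N ≤ (N / m) * (2 * m) := by nlinarith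
        exact_mod_cast h'
      have h3 := hK _ hu
      calc (N : ℝ) / 16 * (invTau m / m) = invTau m / 2 * ((N : ℝ) / (2 * m) / 4) := by
            field_simp; ring
        _ ≤ _ := mul_le_mul_of_nonneg_left (by linarith) (by linarith [invTau_nonneg m])
    · intro m hm
      obtain ⟨⟨hm1, hmM⟩, hmc⟩ := mem_coprimeUpTo.mp hm
      exact mem_coprimeUpTo.mpr ⟨⟨hm1, hmM.trans (Nat.div_le_self _ _)⟩, hmc⟩
    · exact mul_nonneg (by linarith [invTau_nonneg m])
        (Finset.sum_nonneg fun p _ => Real.log_natCast_nonneg p)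
  have hsq : √(Real.log N) * √(Real.log N) = Real.log N := Real.mul_self_sqrt hlog.le
  have hs0 : 0 < √(Real.log N) := Real.sqrt_pos.mpr hlog
  rw [div_le_iff₀ hs0]
  have h4 : (N : ℝ) / 16 * (√(1 / (4 * y)) * √(Real.log N)) ≤
      √(Real.log N) * √(Real.log N) * ∑ n ∈ coprimeUpTo y N, invTau n := by
    rw [hsq]
    exact (mul_le_mul_of_nonneg_left hT' (by positivity)).trans hmain
  refine le_of_mul_le_mul_right ?_ hs0
  linarith

lemma exists_multiplier {y : ℕ} (hy : 1 ≤ y) (z : ℤ) {n : ℕ} (hn : n.Coprime y) :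
    ∃ b ∈ Finset.Icc 1 y, ((n * b : ℕ) : ℤ) % (y : ℤ) = z % (y : ℤ) := by
  have : NeZero y := ⟨by omega⟩
  set v : ZMod y := (n : ZMod y)⁻¹ * (z : ZMod y) with hv
  have hnv : (n : ZMod y) * v = z := by
    rw [hv, ← mul_assoc, ZMod.coe_mul_inv_eq_one n hn, one_mul]
  have key : ∀ b : ℕ, (b : ZMod y) = v → ((n * b : ℕ) : ℤ) % (y : ℤ) = z % (y : ℤ) := by
    intro b hb
    apply (ZMod.intCast_eq_intCast_iff' _ _ _).mp
    push_cast
    rw [hb, hnv]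
  -- The residue `0` is represented by `b = y`, as `b` has to be positive.
  by_cases h0 : v.val = 0
  · refine ⟨y, Finset.mem_Icc.mpr ⟨hy, le_rfl⟩, key y ?_⟩
    rw [ZMod.natCast_self, (ZMod.val_eq_zero v).mp h0]
  · exact ⟨v.val, Finset.mem_Icc.mpr ⟨by omega, (ZMod.val_lt v).le⟩,
      key _ (ZMod.natCast_zmod_val v)⟩

/-- Multiplying each `n` by a suitable `b ∈ [1, y]` lands in the residue class of `z`. One factor `y`
comes from `d (n * b) ≤ y * d n`, the other from the number of possible multipliers `b`. -/
lemma sum_coprime_le_sum_residue {y : ℕ} (hy : 1 ≤ y) (z : ℤ) {N X : ℕ} (hNX : N * y ≤ X) :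
    ∑ n ∈ coprimeUpTo y N, invTau n ≤ (y : ℝ) ^ 2 *
      ∑ n ∈ (Finset.Icc 1 X).filter (fun n : ℕ => (n : ℤ) % (y : ℤ) = z % (y : ℤ)),
        invTau n := by
  classical
  set S := ∑ n ∈ (Finset.Icc 1 X).filter (fun n : ℕ => (n : ℤ) % (y : ℤ) = z % (y : ℤ)),
        invTau n with hS
  have h1 : ∑ n ∈ coprimeUpTo y N, invTau n ≤
      ∑ n ∈ coprimeUpTo y N, ∑ b ∈ Finset.Icc 1 y,
        if ((n * b : ℕ) : ℤ) % (y : ℤ) = z % (y : ℤ) then y * invTau (n * b) else 0 := by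
    refine Finset.sum_le_sum fun n hn => ?_
    obtain ⟨⟨hn1, _⟩, hnc⟩ := mem_coprimeUpTo.mp hn
    obtain ⟨b, hb, hbz⟩ := exists_multiplier hy z hnc
    have hb' := Finset.mem_Icc.mp hb
    have h2 := invTau_le_mul (a := n) (b := b) (k := y) (by omega) (by omega)
      ((Nat.card_divisors_le_self b).trans hb'.2)
    refine le_trans ?_ (Finset.single_le_sum (fun b _ => ?_) hb)
    · rw [if_pos hbz]; exact h2
    · split_ifs
      · exact mul_nonneg (by positivity) (invTau_nonneg _)
      · exact le_rfl
  refine h1.trans ?_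
  rw [Finset.sum_comm]
  have h2 : ∀ b ∈ Finset.Icc 1 y, (∑ n ∈ coprimeUpTo y N,
      if ((n * b : ℕ) : ℤ) % (y : ℤ) = z % (y : ℤ) then y * invTau (n * b) else 0) ≤ y * S := by
    intro b hb
    obtain ⟨hb1, hby⟩ := Finset.mem_Icc.mp hb
    rw [← Finset.sum_filter, ← Finset.mul_sum]
    refine mul_le_mul_of_nonneg_left ?_ (by positivity)
    rw [← Finset.sum_image (f := invTau) (g := fun n => n * b)
      fun m _ n _ h => Nat.eq_of_mul_eq_mul_right hb1 h]
    refine Finset.sum_le_sum_of_subset_of_nonneg ?_ fun n _ _ => invTau_nonneg n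
    intro m hm
    obtain ⟨n, hn, rfl⟩ := Finset.mem_image.mp hm
    obtain ⟨hn, hnz⟩ := Finset.mem_filter.mp hn
    obtain ⟨⟨hn1, hnN⟩, _⟩ := mem_coprimeUpTo.mp hn
    exact Finset.mem_filter.mpr ⟨Finset.mem_Icc.mpr ⟨Nat.mul_pos hn1 hb1,
      (Nat.mul_le_mul hnN hby).trans hNX⟩, hnz⟩
  refine (Finset.sum_le_sum h2).trans (le_of_eq ?_)
  rw [Finset.sum_const, Nat.card_Icc, nsmul_eq_mul, Nat.add_sub_cancel]
  ring

/-- For fixed y ≥ 1 and z ∈ ℤ, there exist c > 0 (depending only on y) and x₀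
such that for all x ≥ x₀: Σ_{n ≤ x, n ≡ z (mod y)} 1/d(n) ≥ c · x/√(log x),
where d(n) is the number of positive divisors of n. -/
theorem stmt8 (y : ℕ) (hy : 1 ≤ y) (z : ℤ) :
    ∃ c : ℝ, 0 < c ∧ ∃ x₀ : ℝ, ∀ x ≥ x₀,
      c * x / Real.sqrt (Real.log x) ≤
        ∑ n ∈ (Finset.Icc 1 ⌊x⌋₊).filter (fun n : ℕ => (n : ℤ) % (y : ℤ) = z % (y : ℤ)),
          1 / (n.divisors.card : ℝ) := by
  obtain ⟨c, hc, N₀, hN₀⟩ := exists_sum_coprime_lower hy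
  have hy0 : (0 : ℝ) < y := by exact_mod_cast hy
  refine ⟨c / (2 * y ^ 3), by positivity, y * (2 * N₀ + 4), fun x hx => ?_⟩
  have hx0 : 0 ≤ x := le_trans (by positivity) hx
  set N := ⌊x / y⌋₊ with hN
  have hxy : (2 * N₀ + 4 : ℝ) ≤ x / y := by
    rw [le_div_iff₀ hy0]; linarith
  have hNle : (N : ℝ) ≤ x / y := Nat.floor_le (by positivity)
  have hNlt : x / y < N + 1 := Nat.lt_floor_add_one _
  have hNN : N₀ ≤ N := by
    have : (N₀ : ℝ) ≤ N := by
      have : (0 : ℝ) ≤ N₀ := by positivity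
      linarith
    exact_mod_cast this
  have hN2 : (2 : ℝ) ≤ N := by
    have : (0 : ℝ) ≤ N₀ := by positivity
    linarith
  have hNx : (N : ℝ) * y ≤ x := (le_div_iff₀ hy0).mp hNle
  have hNX : N * y ≤ ⌊x⌋₊ := Nat.le_floor (by exact_mod_cast hNx)
  have h1 := hN₀ N hNN
  have h2 := sum_coprime_le_sum_residue hy z hNX
  have hy1 : (1 : ℝ) ≤ y := by exact_mod_cast hy
  have hNx' : (N : ℝ) ≤ x := by nlinarith
  have hlogN : 0 < Real.log N := Real.log_pos (by linarith)
  have hsN : 0 < √(Real.log N) := Real.sqrt_pos.mpr hlogN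
  have hsle : √(Real.log N) ≤ √(Real.log x) :=
    Real.sqrt_le_sqrt (Real.log_le_log (by linarith) hNx')
  have h3 : c * x / (2 * y) / √(Real.log x) ≤ c * N / √(Real.log N) := by
    apply div_le_div₀ (by positivity) ?_ hsN hsle
    have : x / y / 2 ≤ N := by linarith
    calc c * x / (2 * y) = c * (x / y / 2) := by field_simp
      _ ≤ c * N := mul_le_mul_of_nonneg_left this hc.le
  have h4 := (h3.trans h1).trans h2
  unfold invTau at h4
  have h5 : c / (2 * y ^ 3) * x / √(Real.log x) =
      (c * x / (2 * y) / √(Real.log x)) / (y : ℝ) ^ 2 := by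
    field_simp
  rw [h5, div_le_iff₀ (by positivity), mul_comm _ ((y : ℝ) ^ 2)]
  exact h4
end
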